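/- arXiv:1707.01151 — 2 statements merged into one kernel-verified Lean document; each statement's English description precedes it below -/
import Mathlib

section
/- For almost every pair (P, λ) ∈ P_d × (0,1), with respect to the Lebesgue measure on ℂ^d × ℝ restricted to P_d × (0,1), the outer billiard map T_{P,λ} of P with contraction λ is asymptotically periodic. -/
open MeasureTheory Set Filter Metric

noncomputable section

/-- Planar cross product of two complex numbers viewed as vectors of `ℝ²`. -/
def cross (z w : ℂ) : ℝ := z.re * w.im - z.im * w.re

/-- `v` is the tuple of vertices of a convex `d`-gon, cyclically ordered
(counterclockwise): every vertex lies strictly to the left of every directed edge. -/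
def IsConvexPolygon {d : ℕ} [NeZero d] (v : Fin d → ℂ) : Prop :=
  ∀ i j : Fin d, j ≠ i → j ≠ i + 1 → 0 < cross (v (i + 1) - v i) (v j - v i)

/-- The polygon `P`, as a subset of the plane. -/
def polygonSet {d : ℕ} (v : Fin d → ℂ) : Set ℂ := convexHull ℝ (Set.range v)

/-- The open cone `A k`: points `z` outside `P` whose supporting line (oriented from `z`
towards the polygon, with the interior of `P` on its left) meets `P` exactly at the
vertex `v k`. -/
def cone {d : ℕ} (v : Fin d → ℂ) (k : Fin d) : Set ℂ :=
  {z | ∀ j : Fin d, j ≠ k → 0 < cross (v k - z) (v j - z)}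

/-- The singular set `S_P`: the points of `X = ℂ \ P` lying in no cone, i.e. whose
supporting line contains an edge of the polygon. -/
def singSet {d : ℕ} (v : Fin d → ℂ) : Set ℂ :=
  {z | z ∉ polygonSet v ∧ ∀ k : Fin d, z ∉ cone v k}

/-- The outer billiard map of the polygon with vertices `v` with contraction `lam`:
on the cone `A k` it is `z ↦ -lam • z + (1+lam) • v k` (extended arbitrarily outside
the union of the cones, which is its actual domain `X \ S_P`). -/
def billiardMap {d : ℕ} (v : Fin d → ℂ) (lam : ℝ) (z : ℂ) : ℂ :=
  haveI := Classical.propDecidable (∃ k : Fin d, z ∈ cone v k)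
  if h : ∃ k : Fin d, z ∈ cone v k then -(lam : ℂ) * z + (1 + (lam : ℂ)) * v h.choose
  else z

/-- A point is non-singular if its whole forward orbit stays in the union of the open
cones, i.e. never meets the singular set. -/
def NonSingular {d : ℕ} (v : Fin d → ℂ) (lam : ℝ) (z : ℂ) : Prop :=
  ∀ n : ℕ, (billiardMap v lam)^[n] z ∈ ⋃ k : Fin d, cone v k

/-- The ω-limit set of the forward orbit of `z` under `f`. -/
def omegaSet (f : ℂ → ℂ) (z : ℂ) : Set ℂ :=
  ⋂ m : ℕ, closure ((fun n : ℕ => f^[n] z) '' {n | m ≤ n})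

/-- The outer billiard map with contraction is asymptotically periodic: it has finitely
many periodic orbits (equivalently, periodic points) and the ω-limit set of every
non-singular point is a periodic orbit. -/
def AsymptoticallyPeriodic {d : ℕ} (v : Fin d → ℂ) (lam : ℝ) : Prop :=
  {z : ℂ | NonSingular v lam z ∧ ∃ p : ℕ, 1 ≤ p ∧ (billiardMap v lam)^[p] z = z}.Finite ∧
  ∀ z : ℂ, NonSingular v lam z → ∃ w : ℂ, NonSingular v lam w ∧
    (∃ p : ℕ, 1 ≤ p ∧ (billiardMap v lam)^[p] w = w) ∧
    omegaSet (billiardMap v lam) z = Set.range fun n : ℕ => (billiardMap v lam)^[n] w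

/-!
All branches of the billiard map contract by `λ`, so if every orbit eventually keeps a positive
distance from the lines through two vertices, then nearby orbits never separate: points of the
compact absorbing ball fall into finitely many classes and each orbit converges to a periodic one.

If there is no such gap, then for every `n` some orbit of length `n` ends within `λ ^ n` of the
line through two vertices `v k`, `v j`. Read backwards from its end, an orbit following the
letters `η 0, η 1, …` lies, up to an error `O(λ ^ n)`, at `(1 + λ) ∑ (-λ) ^ s v (η s)`; evaluating
the affine form of the line and passing to a limit of words gives `∑ ℓ (v (η s)) (-λ) ^ s = 0`,
where `ℓ` is that form.

For fixed vertices this is rare in `λ`. The words that occur have subexponential complexity: near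
any point the singular lines of all orders have finitely many directions, which bounds the number of
words of length `n` from there independently of `n`, and after `m` steps the orbits following one
word are all near one point. On the other hand, a power series with bounded coefficients has zeros
of finite order only, so a zero is determined by a prefix of length `n` of the coefficients up to an
error exponentially small in `n`. The series does not vanish identically, because `η` uses a letter
`i` other than `k` and `j`, and `ℓ (v i) ≠ 0` if no three vertices are collinear. Almost every tuple
of vertices has this property, and Fubini's theorem concludes.
-/

/-! ### Limit sets of orbits -/

theorem mapClusterPt_of_tendsto_dist {ι X : Type*} [PseudoMetricSpace X] {l : Filter ι}
    {u v : ι → X} {x : X} (huv : Tendsto (fun i => dist (u i) (v i)) l (nhds 0))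
    (hu : MapClusterPt x l u) : MapClusterPt x l v := by
  refine (nhds_basis_ball.mapClusterPt_iff_frequently).2 fun ε hε => ?_
  have hu' := (nhds_basis_ball.mapClusterPt_iff_frequently).1 hu (ε / 2) (half_pos hε)
  refine (hu'.and_eventually (huv.eventually_lt_const (half_pos hε))).mono fun i hi => ?_
  have := dist_triangle_left (v i) x (u i)
  rw [mem_ball] at hi ⊢
  linarith

theorem mapClusterPt_iterate_iff_of_mem_periodicPts {X : Type*} [TopologicalSpace X] [T1Space X]
    {f : X → X} {w x : X} (hw : w ∈ Function.periodicPts f) :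
    MapClusterPt x atTop (fun n => f^[n] w) ↔ x ∈ range fun n => f^[n] w := by
  obtain ⟨p, hp, hfp⟩ := Function.mem_periodicPts.1 hw
  constructor
  · refine fun h => IsClosed.mem_of_mapClusterPt (Finite.isClosed ?_) h (.of_forall mem_range_self)
    refine ((finite_lt_nat p).image fun n => f^[n] w).subset ?_
    rintro _ ⟨n, rfl⟩
    exact ⟨n % p, Nat.mod_lt _ hp, hfp.iterate_mod_apply n⟩
  · rintro ⟨i, rfl⟩
    refine mapClusterPt_iff_frequently.2 fun s hs => frequently_atTop.2 fun m => ?_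
    refine ⟨i + m * p, by nlinarith, ?_⟩
    have hper : f^[i + m * p] w = f^[i] w := by
      rw [Function.iterate_add_apply, (hfp.const_mul m).eq]
    exact hper ▸ mem_of_mem_nhds hs

theorem mem_omegaSet_iff {f : ℂ → ℂ} {z x : ℂ} :
    x ∈ omegaSet f z ↔ MapClusterPt x atTop fun n => f^[n] z := by
  rw [mapClusterPt_atTop_iff_forall_mem_closure]
  exact mem_iInter

theorem omegaSet_eq_range_of_tendsto_dist {f : ℂ → ℂ} {z w : ℂ} {J : ℕ}
    (hw : w ∈ Function.periodicPts f)
    (h : Tendsto (fun n => dist (f^[n + J] z) (f^[n] w)) atTop (nhds 0)) :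
    omegaSet f z = range fun n => f^[n] w := by
  ext x
  have hshift : MapClusterPt x atTop (fun n => f^[n] z) ↔
      MapClusterPt x atTop fun n => f^[n + J] z := by
    conv_lhs => rw [← map_add_atTop_eq_nat J]
    exact mapClusterPt_comp.symm
  rw [mem_omegaSet_iff, hshift, ← mapClusterPt_iterate_iff_of_mem_periodicPts hw]
  exact ⟨mapClusterPt_of_tendsto_dist h,
    mapClusterPt_of_tendsto_dist (by simpa only [dist_comm] using h)⟩

/-! ### Locally contracting maps -/

theorem exists_ne_dist_lt_of_totallyBounded {ι X : Type*} [Infinite ι] [PseudoMetricSpace X]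
    {s : Set X} (hs : TotallyBounded s) {x : ι → X} (hx : ∀ i, x i ∈ s) {δ : ℝ} (hδ : 0 < δ) :
    ∃ i j, i ≠ j ∧ dist (x i) (x j) < δ := by
  obtain ⟨t, ht, hst⟩ := Metric.totallyBounded_iff.1 hs (δ / 2) (half_pos hδ)
  have hc : ∀ i, ∃ c : t, dist (x i) c < δ / 2 := fun i => by
    obtain ⟨c, hct, hc⟩ := mem_iUnion₂.1 (hst (hx i))
    exact ⟨⟨c, hct⟩, hc⟩
  choose c hc using hc
  have := ht.to_subtype
  obtain ⟨i, j, hij, hcij⟩ := Finite.exists_ne_map_eq_of_infinite c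
  refine ⟨i, j, hij, ?_⟩
  have hj := hc j
  rw [← hcij] at hj
  linarith [hc i, dist_triangle_right (x i) (x j) (c i)]

/-- The self-map `f` preserves `G` and contracts, with ratio `K`, the distance from a point of `G`
to any point (of `G` or not) less than `δ` away from it. -/
structure ContractsNear {X : Type*} [PseudoMetricSpace X] (f : X → X) (G : Set X) (K δ : ℝ) :
    Prop where
  nonneg : 0 ≤ K
  lt_one : K < 1
  pos : 0 < δ
  mapsTo : MapsTo f G G
  dist_le : ∀ z ∈ G, ∀ w, dist z w < δ → dist (f z) (f w) ≤ K * dist z w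

namespace ContractsNear

variable {X : Type*}

section PseudoMetricSpace

variable [PseudoMetricSpace X] {f : X → X} {G : Set X} {K δ : ℝ} {z w : X}

theorem dist_iterate_le (h : ContractsNear f G K δ) (hz : z ∈ G) (hzw : dist z w < δ) (n : ℕ) :
    dist (f^[n] z) (f^[n] w) ≤ K ^ n * dist z w := by
  induction n with
  | zero => simp
  | succ n ih =>
    have hn : dist (f^[n] z) (f^[n] w) < δ := by
      have : K ^ n * dist z w ≤ dist z w :=
        mul_le_of_le_one_left dist_nonneg (pow_le_one₀ h.nonneg h.lt_one.le)
      linarith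
    rw [Function.iterate_succ_apply', Function.iterate_succ_apply']
    calc dist (f (f^[n] z)) (f (f^[n] w)) ≤ K * dist (f^[n] z) (f^[n] w) :=
          h.dist_le _ (h.mapsTo.iterate n hz) _ hn
      _ ≤ K * (K ^ n * dist z w) := mul_le_mul_of_nonneg_left ih h.nonneg
      _ = K ^ (n + 1) * dist z w := by ring

theorem dist_iterate_lt (h : ContractsNear f G K δ) (hz : z ∈ G) (hzw : dist z w < δ) (n : ℕ) :
    dist (f^[n] z) (f^[n] w) < δ :=
  ((h.dist_iterate_le hz hzw n).trans
    (mul_le_of_le_one_left dist_nonneg (pow_le_one₀ h.nonneg h.lt_one.le))).trans_lt hzw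

theorem tendsto_dist_iterate (h : ContractsNear f G K δ) (hz : z ∈ G) (hzw : dist z w < δ) :
    Tendsto (fun n => dist (f^[n] z) (f^[n] w)) atTop (nhds 0) := by
  refine squeeze_zero (fun _ => dist_nonneg) (h.dist_iterate_le hz hzw) ?_
  simpa using (tendsto_pow_atTop_nhds_zero_of_lt_one h.nonneg h.lt_one).mul_const (dist z w)

theorem exists_dist_iterate_lt (h : ContractsNear f G K δ) (hG : TotallyBounded G) (hz : z ∈ G) :
    ∃ m p, 0 < p ∧ dist (f^[m] z) (f^[p] (f^[m] z)) < δ := by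
  obtain ⟨a, b, hab, hd⟩ := exists_ne_dist_lt_of_totallyBounded hG
    (x := fun n => f^[n] z) (fun n => h.mapsTo.iterate n hz) h.pos
  wlog hlt : a < b generalizing a b
  · exact this b a hab.symm (by rwa [dist_comm]) (by omega)
  refine ⟨a, b - a, by omega, ?_⟩
  rwa [← Function.iterate_add_apply, Nat.sub_add_cancel hlt.le]

end PseudoMetricSpace

variable [MetricSpace X] {f : X → X} {G : Set X} {K δ : ℝ} {z w : X}

theorem eq_of_mem_periodicPts (h : ContractsNear f G K δ) (hz : z ∈ G) (hzw : dist z w < δ)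
    (hzf : z ∈ Function.periodicPts f) (hwf : w ∈ Function.periodicPts f) : z = w := by
  obtain ⟨p, hp, hzp⟩ := Function.mem_periodicPts.1 hzf
  obtain ⟨q, hq, hwq⟩ := Function.mem_periodicPts.1 hwf
  have hle := h.dist_iterate_le hz hzw (p * q)
  rw [(hzp.mul_const q).eq, (hwq.const_mul p).eq] at hle
  have hK : K ^ (p * q) < 1 := pow_lt_one₀ h.nonneg h.lt_one (by positivity)
  exact dist_le_zero.1 (by nlinarith [dist_nonneg (x := z) (y := w)])

theorem finite_inter_periodicPts (h : ContractsNear f G K δ) (hG : TotallyBounded G) :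
    (G ∩ Function.periodicPts f).Finite := by
  by_contra hinf
  have := infinite_coe_iff.2 hinf
  obtain ⟨x, y, hxy, hd⟩ := exists_ne_dist_lt_of_totallyBounded hG
    (x := ((↑) : ↥(G ∩ Function.periodicPts f) → X)) (fun x => x.2.1) h.pos
  exact hxy (Subtype.ext (h.eq_of_mem_periodicPts x.2.1 hd x.2.2 y.2.2))

theorem cauchySeq_iterate (h : ContractsNear f G K δ) (hz : z ∈ G) {p : ℕ} (hp : 0 < p)
    (hd : dist z (f^[p] z) < δ) : CauchySeq fun j => f^[p * j] z := by
  refine cauchySeq_of_le_geometric (K ^ p) (dist z (f^[p] z))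
    (pow_lt_one₀ h.nonneg h.lt_one hp.ne') fun j => ?_
  rw [mul_add_one, Function.iterate_add_apply, ← pow_mul, mul_comm (dist _ _)]
  exact h.dist_iterate_le hz hd (p * j)

theorem exists_mem_periodicPts_tendsto_dist [CompleteSpace X] (h : ContractsNear f G K δ)
    (hG : TotallyBounded G) (hz : z ∈ G) :
    ∃ w ∈ Function.periodicPts f, (∀ n, ∃ y ∈ G, dist y (f^[n] w) < δ) ∧
      ∃ J, Tendsto (fun n => dist (f^[n + J] z) (f^[n] w)) atTop (nhds 0) := by
  obtain ⟨m, p, hp, hd⟩ := h.exists_dist_iterate_lt hG hz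
  set y := f^[m] z
  have hyG : ∀ n, f^[n] y ∈ G := fun n => h.mapsTo.iterate n (h.mapsTo.iterate m hz)
  obtain ⟨w, hw⟩ := cauchySeq_tendsto_of_complete (h.cauchySeq_iterate (hyG 0) hp hd)
  have hnear : ∀ᶠ j in atTop, dist (f^[p * j] y) w < δ := hw.eventually (ball_mem_nhds w h.pos)
  obtain ⟨N, hN⟩ := hnear.exists
  have hfw : Tendsto (fun j => f^[p * (j + 1)] y) atTop (nhds (f^[p] w)) := by
    have hw0 := tendsto_iff_dist_tendsto_zero.1 hw
    refine tendsto_iff_dist_tendsto_zero.2 (squeeze_zero' (.of_forall fun _ => dist_nonneg) ?_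
      (by simpa using hw0.const_mul (K ^ p)))
    filter_upwards [hnear] with j hj
    rw [mul_add_one, add_comm, Function.iterate_add_apply]
    exact h.dist_iterate_le (hyG _) hj p
  have hper : f^[p] w = w := tendsto_nhds_unique hfw (hw.comp (tendsto_add_atTop_nat 1))
  refine ⟨w, Function.mk_mem_periodicPts hp hper,
    fun n => ⟨_, h.mapsTo.iterate n (hyG (p * N)), h.dist_iterate_lt (hyG _) hN n⟩,
    p * N + m, ?_⟩
  simpa only [Function.iterate_add_apply] using h.tendsto_dist_iterate (hyG (p * N)) hN

end ContractsNear

/-! ### Power series with bounded coefficients -/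

/-- The sum `∑ₙ aₙ xⁿ` of the power series with coefficients `a`. -/
def seriesSum (a : ℕ → ℝ) (x : ℝ) : ℝ := ∑' n, a n * x ^ n

/-- `x` is a zero of `f` of order at most `q`, with a lower bound for `f` made explicit by the
single natural number `m`, so that there are countably many cases. -/
def IsZeroOfOrderLE (f : ℝ → ℝ) (q m : ℕ) (x : ℝ) : Prop :=
  f x = 0 ∧ ∀ y, |y - x| < 1 / (m + 1) → |y - x| ^ q ≤ (m + 1) * |f y|

theorem exists_isZeroOfOrderLE_of_analyticAt {f : ℝ → ℝ} {x : ℝ} (hf : AnalyticAt ℝ f x)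
    (hx : f x = 0) (hne : ¬ ∀ᶠ y in nhds x, f y = 0) : ∃ q m, IsZeroOfOrderLE f q m x := by
  obtain ⟨q, g, hg, hgx, hfg⟩ := hf.exists_eventuallyEq_pow_smul_nonzero_iff.2 hne
  have hg2 : ∀ᶠ y in nhds x, |g x| / 2 < |g y| :=
    hg.continuousAt.abs.eventually_const_lt (half_lt_self (abs_pos.2 hgx))
  obtain ⟨ε, hε, hball⟩ := Metric.eventually_nhds_iff.1 (hg2.and hfg)
  obtain ⟨m, hm⟩ := exists_nat_gt (max (1 / ε) (2 / |g x|))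
  obtain ⟨hmε, hmg⟩ := max_lt_iff.1 hm
  refine ⟨q, m, hx, fun y hy => ?_⟩
  have hyε : dist y x < ε := by
    rw [Real.dist_eq]
    exact hy.trans ((one_div_lt (by positivity) hε).2 (by linarith))
  obtain ⟨hgy, hfy⟩ := hball hyε
  have hone : 1 ≤ (m + 1) * |g y| := by
    rw [div_lt_iff₀ (abs_pos.2 hgx)] at hmg
    nlinarith [abs_nonneg (g x)]
  calc |y - x| ^ q ≤ |y - x| ^ q * ((m + 1) * |g y|) := le_mul_of_one_le_right (by positivity) hone
    _ = (m + 1) * |f y| := by rw [hfy, smul_eq_mul, abs_mul, abs_pow]; ring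

section BoundedCoefficients

variable {a a' : ℕ → ℝ} {K x b : ℝ}

theorem hasSum_seriesSum (ha : ∀ n, |a n| ≤ K) (hx : |x| < 1) :
    HasSum (fun n => a n * x ^ n) (seriesSum a x) := by
  refine (Summable.of_norm_bounded (g := fun n => K * |x| ^ n)
    ((summable_geometric_of_lt_one (abs_nonneg _) hx).mul_left K) fun n => ?_).hasSum
  rw [norm_mul, norm_pow, Real.norm_eq_abs, Real.norm_eq_abs]
  exact mul_le_mul_of_nonneg_right (ha n) (by positivity)

theorem abs_seriesSum_sub_sum_range_le (ha : ∀ n, |a n| ≤ K) (hx : |x| ≤ b) (hb : b < 1) (n : ℕ) :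
    |seriesSum a x - ∑ s ∈ Finset.range n, a s * x ^ s| ≤ K / (1 - b) * b ^ n := by
  have hsum := (hasSum_seriesSum ha (hx.trans_lt hb)).summable
  have hb0 : 0 ≤ b := (abs_nonneg x).trans hx
  have hK : 0 ≤ K := (abs_nonneg _).trans (ha 0)
  have hg : HasSum (fun s => K * b ^ n * b ^ s) (K * b ^ n * (1 - b)⁻¹) :=
    (hasSum_geometric_of_lt_one hb0 hb).mul_left _
  rw [seriesSum, ← hsum.sum_add_tsum_nat_add n, add_sub_cancel_left, ← Real.norm_eq_abs]
  refine (tsum_of_norm_bounded hg fun s => ?_).trans_eq (by rw [div_eq_mul_inv]; ring)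
  rw [norm_mul, norm_pow, Real.norm_eq_abs, Real.norm_eq_abs, mul_assoc, ← pow_add, add_comm n s]
  gcongr
  exact ha _

theorem abs_seriesSum_sub_seriesSum_le (ha : ∀ n, |a n| ≤ K) (ha' : ∀ n, |a' n| ≤ K)
    (hx : |x| ≤ b) (hb : b < 1) {n : ℕ} (h : ∀ s < n, a s = a' s) :
    |seriesSum a x - seriesSum a' x| ≤ 2 * (K / (1 - b) * b ^ n) := by
  have hsum : ∑ s ∈ Finset.range n, a s * x ^ s = ∑ s ∈ Finset.range n, a' s * x ^ s :=
    Finset.sum_congr rfl fun s hs => by rw [h s (Finset.mem_range.1 hs)]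
  have h1 := abs_seriesSum_sub_sum_range_le ha hx hb n
  have h2 := abs_seriesSum_sub_sum_range_le ha' hx hb n
  have := abs_sub_le (seriesSum a x) (∑ s ∈ Finset.range n, a s * x ^ s) (seriesSum a' x)
  rw [hsum] at h1 this
  rw [abs_sub_comm] at h2
  linarith

theorem hasFPowerSeriesOnBall_seriesSum (ha : ∀ n, |a n| ≤ K) :
    HasFPowerSeriesOnBall (seriesSum a) (FormalMultilinearSeries.ofScalars ℝ a) 0 1 where
  r_le := by
    simpa using (FormalMultilinearSeries.ofScalars ℝ a).le_radius_of_bound (r := 1) K fun n => by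
      simpa using ha n
  r_pos := one_pos
  hasSum {y} hy := by
    have hy1 : |y| < 1 := by simpa [edist_dist, Real.dist_eq] using hy
    simpa [FormalMultilinearSeries.ofScalars_apply_eq, mul_comm] using hasSum_seriesSum ha hy1

theorem analyticOnNhd_seriesSum (ha : ∀ n, |a n| ≤ K) :
    AnalyticOnNhd ℝ (seriesSum a) (ball 0 1) := by
  simpa [← Metric.eball_ofReal] using (hasFPowerSeriesOnBall_seriesSum ha).analyticOnNhd

theorem not_eventually_seriesSum_eq_zero (ha : ∀ n, |a n| ≤ K) (hne : ∃ n, a n ≠ 0)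
    (hx : |x| < 1) : ¬ ∀ᶠ y in nhds x, seriesSum a y = 0 := by
  intro h
  have hzero : EqOn (seriesSum a) 0 (ball 0 1) :=
    (analyticOnNhd_seriesSum ha).eqOn_of_preconnected_of_eventuallyEq (fun _ _ => analyticAt_const)
      (convex_ball 0 1).isPreconnected (by simpa using hx) h
  have hzero' : seriesSum a =ᶠ[nhds 0] 0 := hzero.eventuallyEq_of_mem (ball_mem_nhds 0 one_pos)
  have hp := ((hasFPowerSeriesOnBall_seriesSum ha).hasFPowerSeriesAt.congr hzero').eq_zero
  obtain ⟨n, hn⟩ := hne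
  exact hn ((FormalMultilinearSeries.ofScalars_eq_zero ℝ n).1 (congrFun hp n))

theorem exists_isZeroOfOrderLE_seriesSum (ha : ∀ n, |a n| ≤ K) (hne : ∃ n, a n ≠ 0)
    (hx : |x| < 1) (h0 : seriesSum a x = 0) : ∃ q m, IsZeroOfOrderLE (seriesSum a) q m x :=
  exists_isZeroOfOrderLE_of_analyticAt (analyticOnNhd_seriesSum ha x (by simpa using hx)) h0
    (not_eventually_seriesSum_eq_zero ha hne hx)

theorem IsZeroOfOrderLE.abs_sub_le {q m n : ℕ} {y β : ℝ} (ha : ∀ n, |a n| ≤ K)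
    (ha' : ∀ n, |a' n| ≤ K) (h : ∀ s < n, a s = a' s) (hβ : 0 < β) (hβ1 : β < 1)
    (hx : |x| ≤ β ^ q) (h0 : seriesSum a x = 0) (hy : IsZeroOfOrderLE (seriesSum a') q m y)
    (hxy : |x - y| < 1 / (m + 1)) :
    |x - y| ≤ max 1 ((m + 1) * (2 * (K / (1 - β ^ q)))) * β ^ n := by
  have hq : q ≠ 0 := by
    rintro rfl
    have := hy.2 y (by simpa using by positivity)
    norm_num [hy.1] at this
  set M := (m + 1) * (2 * (K / (1 - β ^ q)))
  have hpow : |x - y| ^ q ≤ (max 1 M * β ^ n) ^ q := by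
    calc |x - y| ^ q ≤ (m + 1) * |seriesSum a' x| := hy.2 x hxy
      _ = (m + 1) * |seriesSum a x - seriesSum a' x| := by rw [h0, zero_sub, abs_neg]
      _ ≤ (m + 1) * (2 * (K / (1 - β ^ q) * (β ^ q) ^ n)) := by
        gcongr
        exact abs_seriesSum_sub_seriesSum_le ha ha' hx (pow_lt_one₀ hβ.le hβ1 hq) h
      _ = M * (β ^ n) ^ q := by rw [← pow_mul, ← pow_mul, mul_comm n]; ring
      _ ≤ max 1 M ^ q * (β ^ n) ^ q := by
        gcongr
        exact (le_max_right 1 M).trans (le_self_pow₀ (le_max_left 1 M) hq)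
      _ = (max 1 M * β ^ n) ^ q := (mul_pow _ _ _).symm
  exact (pow_le_pow_iff_left₀ (abs_nonneg _) (by positivity) hq).1 hpow

end BoundedCoefficients

/-! ### Zeros of series along words of subexponential complexity -/

section Words

variable {A : Type*}

/-- The words of length `N` occurring as blocks of consecutive letters in elements of `L`. -/
def factors (L : Set (ℕ → A)) (N : ℕ) : Set (Fin N → A) :=
  {u | ∃ η ∈ L, ∃ t, u = fun i : Fin N => η (t + i)}

/-- The number of factors of length `N` of `L` grows subexponentially in `N`, in a weak sense:
for every `β < 1` it is smaller than `(1 / β) ^ N` for at least one `N`. -/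
def HasSubexponentialComplexity (L : Set (ℕ → A)) : Prop :=
  ∀ β : ℝ, 0 < β → β < 1 → ∃ N, (factors L N).ncard * β ^ N < 1

theorem eqOn_of_blocks_eq {N : ℕ} {η η' : ℕ → A} {l : ℕ}
    (h : ∀ t < l, (fun i : Fin N => η (t * N + i)) = fun i : Fin N => η' (t * N + i)) :
    ∀ s < l * N, η s = η' s := by
  intro s hs
  have hN : 0 < N := Nat.pos_of_ne_zero (by rintro rfl; simp at hs)
  have := congrFun (h (s / N) (Nat.div_lt_of_lt_mul (by rwa [mul_comm] at hs)))
    ⟨s % N, Nat.mod_lt _ hN⟩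
  simpa only [Nat.div_add_mod'] using this

theorem volume_le_of_coding {N : ℕ} {S : Set (Fin N → A)} (hS : S.Finite) {Z : Set ℝ}
    {η : ℝ → ℕ → A} {C β : ℝ} (hcode : ∀ x ∈ Z, ∀ t, (fun i : Fin N => η x (t * N + i)) ∈ S)
    (hdist : ∀ x ∈ Z, ∀ y ∈ Z, ∀ n, (∀ s < n, η x s = η y s) → |x - y| ≤ C * β ^ n) (l : ℕ) :
    volume Z ≤ ENNReal.ofReal ((S.ncard * β ^ N) ^ l * C) := by
  have := hS.fintype
  set cell : (Fin l → S) → Set ℝ :=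
    fun u => {x ∈ Z | ∀ t : Fin l, (fun i : Fin N => η x (t * N + i)) = u t}
  have hcover : Z ⊆ ⋃ u, cell u := fun x hx =>
    mem_iUnion.2 ⟨fun t => ⟨_, hcode x hx t⟩, hx, fun _ => rfl⟩
  have hcell : ∀ u, volume (cell u) ≤ ENNReal.ofReal (C * β ^ (l * N)) := by
    refine fun u => (Real.volume_le_diam _).trans (Metric.ediam_le fun x hx y hy => ?_)
    rw [edist_dist, Real.dist_eq]
    exact ENNReal.ofReal_le_ofReal (hdist x hx.1 y hy.1 _ (eqOn_of_blocks_eq fun t ht =>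
      (hx.2 ⟨t, ht⟩).trans (hy.2 ⟨t, ht⟩).symm))
  calc volume Z ≤ ∑ u, volume (cell u) :=
        (measure_mono hcover).trans (measure_iUnion_fintype_le _ _)
    _ ≤ ∑ _u : Fin l → S, ENNReal.ofReal (C * β ^ (l * N)) :=
        Finset.sum_le_sum fun u _ => hcell u
    _ = ENNReal.ofReal ((S.ncard : ℝ) ^ l * (C * β ^ (l * N))) := by
      rw [Finset.sum_const, Finset.card_univ, nsmul_eq_mul, Fintype.card_fun, Fintype.card_fin,
        ENNReal.ofReal_mul (p := (S.ncard : ℝ) ^ l) (by positivity),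
        ← Nat.cast_pow, ENNReal.ofReal_natCast, ← Nat.card_coe_set_eq, Nat.card_eq_fintype_card]
    _ = ENNReal.ofReal ((S.ncard * β ^ N) ^ l * C) := by
      rw [mul_pow, ← pow_mul, mul_comm l N]
      ring_nf

theorem volume_eq_zero_of_coding {N : ℕ} {S : Set (Fin N → A)} (hS : S.Finite) {Z : Set ℝ}
    {η : ℝ → ℕ → A} {C β : ℝ} (hβ : 0 ≤ β) (hSβ : S.ncard * β ^ N < 1)
    (hcode : ∀ x ∈ Z, ∀ t, (fun i : Fin N => η x (t * N + i)) ∈ S)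
    (hdist : ∀ x ∈ Z, ∀ y ∈ Z, ∀ n, (∀ s < n, η x s = η y s) → |x - y| ≤ C * β ^ n) :
    volume Z = 0 := by
  have hlim := ENNReal.tendsto_ofReal
    ((tendsto_pow_atTop_nhds_zero_of_lt_one (by positivity) hSβ).mul_const C)
  rw [zero_mul, ENNReal.ofReal_zero] at hlim
  exact le_bot_iff.1 (ge_of_tendsto' hlim (volume_le_of_coding hS hcode hdist))

theorem exists_rat_lt_pow {x : ℝ} (hx : x < 1) (q : ℕ) :
    ∃ β : ℚ, 0 < (β : ℝ) ∧ (β : ℝ) < 1 ∧ x < (β : ℝ) ^ q := by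
  have hpow : ∀ᶠ β : ℝ in nhdsWithin 1 (Iio 1), x < β ^ q :=
    nhdsWithin_le_nhds ((continuous_pow q).continuousAt.eventually_const_lt (by simpa using hx))
  obtain ⟨r, hr, hr01⟩ := (hpow.and (Ioo_mem_nhdsLT zero_lt_one)).exists
  obtain ⟨β, hrβ, hβ1⟩ := exists_rat_btwn hr01.2
  exact ⟨β, hr01.1.trans hrβ, hβ1, hr.trans_le (pow_le_pow_left₀ hr01.1.le hrβ.le q)⟩

variable [Finite A]

theorem volume_setOfPred_isZeroOfOrderLE (c : A → ℝ) (L : ℝ → Set (ℕ → A)) (q m : ℕ) {β : ℝ}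
    (hβ : 0 < β) (hβ1 : β < 1) {N : ℕ} {S : Set (Fin N → A)} (hS : S.ncard * β ^ N < 1) :
    volume {x | |x| < β ^ q ∧ factors (L x) N = S ∧
      ∃ η ∈ L x, IsZeroOfOrderLE (seriesSum fun n => c (η n)) q m x} = 0 := by
  obtain ⟨K, hK⟩ := Finite.exists_le fun a => |c a|
  refine measure_null_of_locally_null _ fun x₀ hx₀ => ?_
  have : Nonempty (ℕ → A) := ⟨hx₀.2.2.choose⟩
  refine ⟨_, inter_mem_nhdsWithin _ (ball_mem_nhds x₀ (ε := 1 / (2 * (m + 1))) (by positivity)), ?_⟩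
  set Z := {x | |x| < β ^ q ∧ factors (L x) N = S ∧
    ∃ η ∈ L x, IsZeroOfOrderLE (seriesSum fun n => c (η n)) q m x}
  have hcode : ∀ x ∈ Z, ∃ η ∈ L x, IsZeroOfOrderLE (seriesSum fun n => c (η n)) q m x :=
    fun x hx => hx.2.2
  choose! η hη hzero using hcode
  refine volume_eq_zero_of_coding (S.toFinite) hβ.le hS (η := η)
    (C := max 1 ((m + 1) * (2 * (K / (1 - β ^ q)))))
    (fun x hx t => hx.1.2.1 ▸ ⟨η x, hη x hx.1, t * N, rfl⟩) fun x hx y hy n hxy => ?_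
  have hdist : |x - y| < 1 / (m + 1) := by
    have h1 := mem_ball.1 hx.2
    have h2 := mem_ball.1 hy.2
    have h3 := dist_triangle_right x y x₀
    have h4 : 1 / ((m : ℝ) + 1) = 1 / (2 * (m + 1)) + 1 / (2 * (m + 1)) := by field_simp; norm_num
    rw [← Real.dist_eq]
    linarith
  exact IsZeroOfOrderLE.abs_sub_le (fun n => hK (η x n)) (fun n => hK (η y n))
    (fun s hs => by rw [hxy s hs]) hβ hβ1 hx.1.1.le (hzero x hx.1).1 (hzero y hy.1) hdist

theorem volume_setOfPred_exists_seriesSum_eq_zero (c : A → ℝ) (L : ℝ → Set (ℕ → A)) :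
    volume {x | |x| < 1 ∧ HasSubexponentialComplexity (L x) ∧
      ∃ η ∈ L x, (∃ n, c (η n) ≠ 0) ∧ seriesSum (fun n => c (η n)) x = 0} = 0 := by
  obtain ⟨K, hK⟩ := Finite.exists_le fun a => |c a|
  refine measure_mono_null (t := ⋃ (q : ℕ) (m : ℕ) (β : ℚ) (N : ℕ) (S : Set (Fin N → A))
    (_ : 0 < (β : ℝ) ∧ (β : ℝ) < 1 ∧ S.ncard * (β : ℝ) ^ N < 1),
    {x | |x| < (β : ℝ) ^ q ∧ factors (L x) N = S ∧
      ∃ η ∈ L x, IsZeroOfOrderLE (seriesSum fun n => c (η n)) q m x}) ?_ ?_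
  · rintro x ⟨hx, hL, η, hη, hne, h0⟩
    obtain ⟨q, m, hqm⟩ := exists_isZeroOfOrderLE_seriesSum (fun n => hK (η n)) hne hx h0
    obtain ⟨β, hβ, hβ1, hxβ⟩ := exists_rat_lt_pow hx q
    obtain ⟨N, hN⟩ := hL β hβ hβ1
    simp only [mem_iUnion]
    exact ⟨q, m, β, N, _, ⟨hβ, hβ1, hN⟩, hxβ, rfl, η, hη, hqm⟩
  · simp only [measure_iUnion_null_iff]
    exact fun q m β N S h => volume_setOfPred_isZeroOfOrderLE c L q m h.1 h.2.1 h.2.2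

end Words

/-! ### The branches of the billiard map -/

section Billiard

variable {d : ℕ}

/-- Twice the signed area of the triangle with vertices `z`, `v k`, `v j`. It is an affine function
of `z`, vanishing on the line through `v k` and `v j`, and these functions cut out the cones. -/
def lineForm (v : Fin d → ℂ) (k j : Fin d) (z : ℂ) : ℝ := cross (v k - z) (v j - z)

/-- The affine map `z ↦ -λ z + (1 + λ) v k` with which the billiard map agrees on the `k`-th
cone. -/
def branch (v : Fin d → ℂ) (lam : ℝ) (k : Fin d) (z : ℂ) : ℂ :=
  -(lam : ℂ) * z + (1 + (lam : ℂ)) * v k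

/-- The orbit of `z` under the branches prescribed by the word `ω`, whatever the cones. -/
def wordOrbit (v : Fin d → ℂ) (lam : ℝ) (ω : ℕ → Fin d) (z : ℂ) : ℕ → ℂ
  | 0 => z
  | n + 1 => branch v lam (ω n) (wordOrbit v lam ω z n)

/-- The first `n` letters of `ω` are the labels of the cones visited by the orbit of `z`. -/
def Follows (v : Fin d → ℂ) (lam : ℝ) (ω : ℕ → Fin d) (z : ℂ) (n : ℕ) : Prop :=
  ∀ i < n, wordOrbit v lam ω z i ∈ cone v (ω i)

/-- The contraction `lam` lies in `(0, 1)` and every branch maps the closed ball of radius `R`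
about the origin into its interior. -/
structure Absorbing (v : Fin d → ℂ) (lam R : ℝ) : Prop where
  pos : 0 < lam
  lt_one : lam < 1
  norm_lt : ∀ i, (1 + lam) * ‖v i‖ < (1 - lam) * R

variable {v : Fin d → ℂ} {lam R : ℝ} {ω ω' : ℕ → Fin d} {z w : ℂ} {i j k : Fin d} {m n : ℕ}

theorem abs_cross_le (z w : ℂ) : |cross z w| ≤ ‖z‖ * ‖w‖ := by
  have h : cross z w = (starRingEnd ℂ z * w).im := by simp [cross]; ring
  rw [h, ← Complex.norm_conj z, ← norm_mul]
  exact Complex.abs_im_le_norm _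

theorem lineForm_swap (v : Fin d → ℂ) (k j : Fin d) (z : ℂ) :
    lineForm v k j z = -lineForm v j k z := by
  simp only [lineForm, cross]
  ring

theorem lineForm_apply_left (v : Fin d → ℂ) (k j : Fin d) : lineForm v k j (v k) = 0 := by
  simp [lineForm, cross]

theorem lineForm_apply_right (v : Fin d → ℂ) (k j : Fin d) : lineForm v k j (v j) = 0 := by
  simp [lineForm, cross]

theorem lineForm_sub_lineForm (v : Fin d → ℂ) (k j : Fin d) (z w : ℂ) :
    lineForm v k j z - lineForm v k j w = cross (w - z) (v j - v k) := by
  simp only [lineForm, cross, Complex.sub_re, Complex.sub_im]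
  ring

theorem lineForm_branch (v : Fin d → ℂ) (lam : ℝ) (k j i : Fin d) (z : ℂ) :
    lineForm v k j (branch v lam i z) =
      -lam * lineForm v k j z + (1 + lam) * lineForm v k j (v i) := by
  simp [lineForm, cross, branch]
  ring

theorem branch_sub_branch (v : Fin d → ℂ) (lam : ℝ) (k : Fin d) (z w : ℂ) :
    branch v lam k z - branch v lam k w = -(lam : ℂ) * (z - w) := by
  simp only [branch]
  ring

theorem dist_branch_branch (v : Fin d → ℂ) (h0 : 0 ≤ lam) (k : Fin d) (z w : ℂ) :
    dist (branch v lam k z) (branch v lam k w) = lam * dist z w := by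
  simp [dist_eq_norm, branch_sub_branch, abs_of_nonneg h0]

theorem lineForm_pos_of_mem_cone (hz : z ∈ cone v k) (hj : j ≠ k) : 0 < lineForm v k j z :=
  hz j hj

theorem eq_of_mem_cone (hk : z ∈ cone v k) (hj : z ∈ cone v j) : k = j := by
  by_contra hne
  have hkj := lineForm_pos_of_mem_cone hk (Ne.symm hne)
  have hjk := lineForm_pos_of_mem_cone hj hne
  rw [lineForm_swap] at hkj
  linarith

theorem billiardMap_eq_branch (lam : ℝ) (hz : z ∈ cone v k) :
    billiardMap v lam z = branch v lam k z := by
  have h : ∃ k : Fin d, z ∈ cone v k := ⟨k, hz⟩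
  rw [billiardMap, dif_pos h, eq_of_mem_cone h.choose_spec hz, branch]

theorem NonSingular.iterate (h : NonSingular v lam z) (m : ℕ) :
    NonSingular v lam ((billiardMap v lam)^[m] z) := fun n => by
  rw [← Function.iterate_add_apply]
  exact h (n + m)

/-! ### Orbits along words -/

theorem wordOrbit_add (v : Fin d → ℂ) (lam : ℝ) (ω : ℕ → Fin d) (z : ℂ) (m n : ℕ) :
    wordOrbit v lam ω z (m + n) =
      wordOrbit v lam (fun i => ω (m + i)) (wordOrbit v lam ω z m) n := by
  induction n with
  | zero => rfl
  | succ n ih => exact congrArg (branch v lam (ω (m + n))) ih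

theorem wordOrbit_congr (v : Fin d → ℂ) (lam : ℝ) (z : ℂ) (h : ∀ i < n, ω i = ω' i) :
    wordOrbit v lam ω z n = wordOrbit v lam ω' z n := by
  induction n with
  | zero => rfl
  | succ n ih =>
    rw [wordOrbit, wordOrbit, ih fun i hi => h i (hi.trans n.lt_succ_self), h n n.lt_succ_self]

theorem dist_wordOrbit_wordOrbit (v : Fin d → ℂ) (h0 : 0 ≤ lam) (ω : ℕ → Fin d) (z w : ℂ)
    (n : ℕ) : dist (wordOrbit v lam ω z n) (wordOrbit v lam ω w n) = lam ^ n * dist z w := by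
  induction n with
  | zero => simp [wordOrbit]
  | succ n ih =>
    rw [wordOrbit, wordOrbit, dist_branch_branch v h0, ih]
    ring

theorem lineForm_wordOrbit (v : Fin d → ℂ) (lam : ℝ) (ω : ℕ → Fin d) (z : ℂ) (k j : Fin d)
    (n : ℕ) : lineForm v k j (wordOrbit v lam ω z n) = (-lam) ^ n * lineForm v k j z +
      (1 + lam) * ∑ s ∈ Finset.range n, lineForm v k j (v (ω (n - 1 - s))) * (-lam) ^ s := by
  induction n with
  | zero => simp [wordOrbit]
  | succ n ih =>
    have hshift : ∀ s ∈ Finset.range n,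
        lineForm v k j (v (ω (n + 1 - 1 - (s + 1)))) * (-lam) ^ (s + 1) =
          -lam * (lineForm v k j (v (ω (n - 1 - s))) * (-lam) ^ s) := fun s _ => by
      rw [show n + 1 - 1 - (s + 1) = n - 1 - s by omega]
      ring
    rw [wordOrbit, lineForm_branch, ih, Finset.sum_range_succ', Finset.sum_congr rfl hshift,
      ← Finset.mul_sum, Nat.add_sub_cancel, Nat.sub_zero]
    ring

theorem Follows.mono (h : Follows v lam ω z n) (hmn : m ≤ n) : Follows v lam ω z m :=
  fun i hi => h i (hi.trans_le hmn)

theorem Follows.shift (h : Follows v lam ω z (m + n)) :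
    Follows v lam (fun i => ω (m + i)) (wordOrbit v lam ω z m) n := fun i hi => by
  rw [← wordOrbit_add]
  exact h (m + i) (by omega)

theorem NonSingular.exists_follows (h : NonSingular v lam z) : ∃ ω : ℕ → Fin d,
    (∀ n, (billiardMap v lam)^[n] z = wordOrbit v lam ω z n) ∧ ∀ n, Follows v lam ω z n := by
  choose ω hω using fun n => mem_iUnion.1 (h n)
  have horbit : ∀ n, (billiardMap v lam)^[n] z = wordOrbit v lam ω z n := fun n => by
    induction n with
    | zero => rfl
    | succ n ih =>
      rw [Function.iterate_succ_apply', billiardMap_eq_branch lam (hω n), ih, wordOrbit]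
  exact ⟨ω, horbit, fun n i _ => horbit i ▸ hω i⟩

/-! ### Absorbing balls -/

theorem norm_wordOrbit_le (h0 : 0 ≤ lam) (hv : ∀ i, (1 + lam) * ‖v i‖ ≤ (1 - lam) * R)
    (ω : ℕ → Fin d) (z : ℂ) (n : ℕ) :
    ‖wordOrbit v lam ω z n‖ ≤ lam ^ n * ‖z‖ + (1 - lam ^ n) * R := by
  induction n with
  | zero => simp [wordOrbit]
  | succ n ih =>
    have hbranch : ‖branch v lam (ω n) (wordOrbit v lam ω z n)‖ ≤
        lam * ‖wordOrbit v lam ω z n‖ + (1 + lam) * ‖v (ω n)‖ := by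
      refine (norm_add_le _ _).trans_eq ?_
      rw [norm_mul, norm_mul, norm_neg, Complex.norm_of_nonneg h0, ← Complex.ofReal_one,
        ← Complex.ofReal_add, Complex.norm_of_nonneg (by linarith)]
    calc ‖wordOrbit v lam ω z (n + 1)‖
        ≤ lam * (lam ^ n * ‖z‖ + (1 - lam ^ n) * R) + (1 - lam) * R :=
          hbranch.trans (add_le_add (mul_le_mul_of_nonneg_left ih h0) (hv _))
      _ = lam ^ (n + 1) * ‖z‖ + (1 - lam ^ (n + 1)) * R := by ring

namespace Absorbing

theorem abs_neg_lt_one (h : Absorbing v lam R) : |-lam| < 1 := by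
  rw [abs_neg, abs_of_pos h.pos]
  exact h.lt_one

theorem wordOrbit_mem (h : Absorbing v lam R) (ω : ℕ → Fin d) (hz : z ∈ closedBall (0 : ℂ) R)
    (n : ℕ) : wordOrbit v lam ω z n ∈ closedBall (0 : ℂ) R := by
  rw [mem_closedBall_zero_iff] at hz ⊢
  have := norm_wordOrbit_le h.pos.le (fun i => (h.norm_lt i).le) ω z n
  nlinarith [pow_pos h.pos n]

theorem norm_vertex_le (h : Absorbing v lam R) (i : Fin d) : ‖v i‖ ≤ R := by
  nlinarith [h.norm_lt i, h.pos, h.lt_one, norm_nonneg (v i)]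

theorem radius_pos [NeZero d] (h : Absorbing v lam R) : 0 < R := by
  nlinarith [h.norm_lt 0, h.pos, h.lt_one, norm_nonneg (v 0)]

theorem abs_lineForm_le (h : Absorbing v lam R) (hz : z ∈ closedBall (0 : ℂ) R) (k j : Fin d) :
    |lineForm v k j z| ≤ 4 * R ^ 2 := by
  have hle : ∀ i, ‖v i - z‖ ≤ 2 * R := fun i => by
    linarith [norm_sub_le (v i) z, h.norm_vertex_le i, mem_closedBall_zero_iff.1 hz]
  calc |lineForm v k j z| ≤ ‖v k - z‖ * ‖v j - z‖ := abs_cross_le _ _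
    _ ≤ (2 * R) * (2 * R) :=
      mul_le_mul (hle k) (hle j) (norm_nonneg _) ((norm_nonneg _).trans (hle k))
    _ = 4 * R ^ 2 := by ring

theorem exists_iterate_mem [NeZero d] (h : Absorbing v lam R) (hz : NonSingular v lam z) :
    ∃ m, (billiardMap v lam)^[m] z ∈ closedBall (0 : ℂ) R := by
  obtain ⟨i₀, hi₀⟩ := Finite.exists_max fun i => ‖v i‖
  have h1 : 0 < 1 - lam := sub_pos.2 h.lt_one
  set r := (1 + lam) * ‖v i₀‖ / (1 - lam)
  have hrR : r < R := (div_lt_iff₀' h1).2 (h.norm_lt i₀)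
  have hr : ∀ i, (1 + lam) * ‖v i‖ ≤ (1 - lam) * r := fun i => by
    rw [mul_div_cancel₀ _ h1.ne']
    nlinarith [hi₀ i, h.pos]
  obtain ⟨ω, hω, -⟩ := hz.exists_follows
  have hpow := tendsto_pow_atTop_nhds_zero_of_lt_one h.pos.le h.lt_one
  have hlim : Tendsto (fun n => lam ^ n * ‖z‖ + (1 - lam ^ n) * r) atTop (nhds r) := by
    simpa using (hpow.mul_const ‖z‖).add ((hpow.const_sub 1).mul_const r)
  obtain ⟨m, hm⟩ := (hlim.eventually_lt_const hrR).exists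
  refine ⟨m, mem_closedBall_zero_iff.2 ?_⟩
  rw [hω m]
  exact (norm_wordOrbit_le h.pos.le hr ω z m).trans hm.le

end Absorbing

theorem exists_nat_absorbing (v : Fin d → ℂ) (h0 : 0 < lam) (h1 : lam < 1) :
    ∃ R : ℕ, Absorbing v lam R := by
  obtain ⟨M, hM⟩ := Finite.exists_le fun i => (1 + lam) * ‖v i‖ / (1 - lam)
  obtain ⟨R, hR⟩ := exists_nat_gt M
  exact ⟨R, h0, h1, fun i => (div_lt_iff₀' (sub_pos.2 h1)).1 ((hM i).trans_lt hR)⟩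

/-! ### The gap criterion for asymptotic periodicity -/

/-- The non-singular points whose orbit stays in the closed ball of radius `R` and on which the
forms `lineForm v k j` with `k ≠ j` are never smaller than `ρ` in absolute value. -/
def gapSet (v : Fin d → ℂ) (lam R ρ : ℝ) : Set ℂ :=
  {z | NonSingular v lam z ∧ ∀ t, (billiardMap v lam)^[t] z ∈ closedBall (0 : ℂ) R ∧
    ∀ k j, k ≠ j → ρ ≤ |lineForm v k j ((billiardMap v lam)^[t] z)|}

variable {ρ : ℝ}

theorem mapsTo_gapSet : MapsTo (billiardMap v lam) (gapSet v lam R ρ) (gapSet v lam R ρ) :=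
  fun z hz => ⟨hz.1.iterate 1, fun t => by
    rw [← Function.iterate_succ_apply]
    exact hz.2 (t + 1)⟩

theorem totallyBounded_gapSet : TotallyBounded (gapSet v lam R ρ) :=
  (isCompact_closedBall (0 : ℂ) R).totallyBounded.subset fun _ hz => (hz.2 0).1

theorem mem_cone_of_mem_gapSet (h : Absorbing v lam R) (hz : z ∈ gapSet v lam R ρ)
    (hk : z ∈ cone v k) (hzw : dist z w < ρ / (2 * R)) : w ∈ cone v k := fun j hj => by
  have hvR : ∀ i, ‖v i‖ ≤ R := h.norm_vertex_le
  have hR : 0 < 2 * R := by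
    have := h.norm_lt k
    nlinarith [h.pos, h.lt_one, norm_nonneg (v k)]
  have hgap : ρ ≤ lineForm v k j z := by
    rw [← abs_of_pos (lineForm_pos_of_mem_cone hk hj)]
    exact (hz.2 0).2 k j hj.symm
  have hdiff : lineForm v k j z - lineForm v k j w < ρ :=
    calc lineForm v k j z - lineForm v k j w = cross (w - z) (v j - v k) :=
          lineForm_sub_lineForm v k j z w
      _ ≤ ‖w - z‖ * ‖v j - v k‖ := (le_abs_self _).trans (abs_cross_le _ _)
      _ ≤ dist z w * (2 * R) := by
        rw [dist_comm, dist_eq_norm]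
        gcongr
        linarith [norm_sub_le (v j) (v k), hvR j, hvR k]
      _ < ρ := (lt_div_iff₀ hR).1 hzw
  change 0 < lineForm v k j w
  linarith

theorem Absorbing.contractsNear_gapSet [NeZero d] (h : Absorbing v lam R) (hρ : 0 < ρ) :
    ContractsNear (billiardMap v lam) (gapSet v lam R ρ) lam (ρ / (2 * R)) where
  nonneg := h.pos.le
  lt_one := h.lt_one
  pos := div_pos hρ (mul_pos two_pos h.radius_pos)
  mapsTo := mapsTo_gapSet
  dist_le z hz w hzw := by
    obtain ⟨k, hk : z ∈ cone v k⟩ := mem_iUnion.1 (hz.1 0)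
    rw [billiardMap_eq_branch lam hk,
      billiardMap_eq_branch lam (mem_cone_of_mem_gapSet h hz hk hzw),
      dist_branch_branch v h.pos.le]

theorem NonSingular.of_forall_dist_gapSet_lt (h : Absorbing v lam R)
    (hw : ∀ n, ∃ y ∈ gapSet v lam R ρ, dist y ((billiardMap v lam)^[n] w) < ρ / (2 * R)) :
    NonSingular v lam w := fun n => by
  obtain ⟨y, hy, hyw⟩ := hw n
  obtain ⟨k, hk⟩ := mem_iUnion.1 (hy.1 0)
  exact mem_iUnion.2 ⟨k, mem_cone_of_mem_gapSet h hy hk hyw⟩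

theorem Absorbing.asymptoticallyPeriodic [NeZero d] (h : Absorbing v lam R) (hρ : 0 < ρ)
    (hgap : ∀ z, NonSingular v lam z → ∃ m, (billiardMap v lam)^[m] z ∈ gapSet v lam R ρ) :
    AsymptoticallyPeriodic v lam := by
  have hG := h.contractsNear_gapSet hρ
  refine ⟨(hG.finite_inter_periodicPts totallyBounded_gapSet).subset ?_, fun z hz => ?_⟩
  · rintro z ⟨hz, p, hp, hzp⟩
    obtain ⟨m, hm⟩ := hgap z hz
    have hreturn : (billiardMap v lam)^[p * m - m + m] z = z := by
      rw [Nat.sub_add_cancel (Nat.le_mul_of_pos_left m hp)]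
      exact Function.IsPeriodicPt.mul_const hzp m
    refine ⟨?_, Function.mk_mem_periodicPts hp hzp⟩
    rw [← hreturn, Function.iterate_add_apply]
    exact mapsTo_gapSet.iterate _ hm
  · obtain ⟨m, hm⟩ := hgap z hz
    obtain ⟨w, hwper, hw, J, hJ⟩ :=
      hG.exists_mem_periodicPts_tendsto_dist totallyBounded_gapSet hm
    refine ⟨w, .of_forall_dist_gapSet_lt h hw, hwper, omegaSet_eq_range_of_tendsto_dist hwper
      (J := J + m) ?_⟩
    simpa only [← add_assoc, Function.iterate_add_apply _ _ m] using hJ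

/-- Some orbit of length `n` starting in the closed ball of radius `R` ends within distance about
`lam ^ n` of the singular lines. -/
def NearSingular (v : Fin d → ℂ) (lam R : ℝ) (n : ℕ) : Prop :=
  ∃ ω, ∃ z ∈ closedBall (0 : ℂ) R, ∃ k j, k ≠ j ∧ Follows v lam ω z n ∧
    |lineForm v k j (wordOrbit v lam ω z n)| < lam ^ n

theorem Absorbing.nearSingular [NeZero d] (h : Absorbing v lam R)
    (hper : ¬AsymptoticallyPeriodic v lam) (n : ℕ) : NearSingular v lam R n := by
  contrapose! hper
  refine h.asymptoticallyPeriodic (pow_pos h.pos n) fun z hz => ?_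
  obtain ⟨m, hm⟩ := h.exists_iterate_mem hz
  refine ⟨n + m, hz.iterate _, fun t => ?_⟩
  obtain ⟨ω, hω, hfollows⟩ := (hz.iterate m).exists_follows
  rw [← Function.iterate_add_apply, ← add_assoc, Function.iterate_add_apply _ _ m, hω]
  refine ⟨h.wordOrbit_mem ω hm _, fun k j hkj => not_lt.1 fun hlt => hper ?_⟩
  rw [wordOrbit_add] at hlt
  exact ⟨_, _, h.wordOrbit_mem ω hm t, k, j, hkj, (hfollows (t + n)).shift, hlt⟩

/-! ### Subexponential growth of the number of words -/

/-- The words of length `n` followed by the orbits of the points of `s`. -/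
def words (v : Fin d → ℂ) (lam : ℝ) (s : Set ℂ) (n : ℕ) : Set (Fin n → Fin d) :=
  {u | ∃ ω, ∃ z ∈ s, Follows v lam ω z n ∧ u = fun i : Fin n => ω i}

theorem words_mono {s t : Set ℂ} (h : s ⊆ t) : words v lam s n ⊆ words v lam t n :=
  fun _ ⟨ω, z, hz, hu⟩ => ⟨ω, z, h hz, hu⟩

/-- The sign vector locating `z` relative to the lines through `x` parallel to the lines
`v k v j`. -/
def signPattern (v : Fin d → ℂ) (x z : ℂ) : Fin d → Fin d → SignType :=
  fun k j => SignType.sign (lineForm v k j z - lineForm v k j x)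

theorem signPattern_branch (v : Fin d → ℂ) (h0 : 0 < lam) (i : Fin d) (x z : ℂ) :
    signPattern v (branch v lam i x) (branch v lam i z) = -signPattern v x z := by
  ext k j : 2
  have hdiff : lineForm v k j (branch v lam i z) - lineForm v k j (branch v lam i x) =
      lam * -(lineForm v k j z - lineForm v k j x) := by
    rw [lineForm_branch, lineForm_branch]
    ring
  simp only [signPattern, Pi.neg_apply]
  rw [hdiff, sign_mul, sign_pos h0, one_mul, Left.sign_neg]

theorem continuous_lineForm (v : Fin d → ℂ) (k j : Fin d) : Continuous (lineForm v k j) := by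
  unfold lineForm cross
  fun_prop

theorem continuous_branch (v : Fin d → ℂ) (lam : ℝ) (k : Fin d) : Continuous (branch v lam k) := by
  unfold branch
  fun_prop

theorem eventually_sign_lineForm_eq (v : Fin d → ℂ) (x : ℂ) : ∀ᶠ z in nhds x, ∀ k j,
    lineForm v k j x ≠ 0 → SignType.sign (lineForm v k j z) = SignType.sign (lineForm v k j x) := by
  simp only [eventually_all]
  intro k j hx
  have := (continuousAt_sign_of_ne_zero hx).comp (continuous_lineForm v k j).continuousAt
  rwa [ContinuousAt, nhds_discrete SignType, tendsto_pure] at this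

theorem exists_mem_nhds_mem_cone_of_signPattern_eq (v : Fin d → ℂ) (x : ℂ) : ∃ U ∈ nhds x,
    ∀ z ∈ U, ∀ w ∈ U, signPattern v x z = signPattern v x w → ∀ k, z ∈ cone v k → w ∈ cone v k := by
  refine ⟨_, eventually_sign_lineForm_eq v x, fun z hz w hw hzw k hk j hj => ?_⟩
  have hsign : SignType.sign (lineForm v k j z) = SignType.sign (lineForm v k j w) := by
    by_cases hx : lineForm v k j x = 0
    · simpa only [signPattern, hx, sub_zero] using congrFun₂ hzw k j
    · exact (hz k j hx).trans (hw k j hx).symm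
  rw [sign_pos (lineForm_pos_of_mem_cone hk hj)] at hsign
  exact sign_eq_one_iff.1 hsign.symm

theorem exists_mem_nhds_eqOn_of_signPattern_eq (v : Fin d → ℂ) (h0 : 0 < lam) (n : ℕ) (x : ℂ) :
    ∃ U ∈ nhds x, ∀ z ∈ U, ∀ w ∈ U, signPattern v x z = signPattern v x w → ∀ ω ω',
      Follows v lam ω z n → Follows v lam ω' w n → ∀ i < n, ω i = ω' i := by
  induction n generalizing x with
  | zero => exact ⟨univ, univ_mem, fun _ _ _ _ _ _ _ _ _ i hi => absurd hi i.not_lt_zero⟩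
  | succ n ih =>
    choose U hU hUω using ih
    obtain ⟨V, hV, hVcone⟩ := exists_mem_nhds_mem_cone_of_signPattern_eq v x
    have hbranch : ∀ᶠ z in nhds x, ∀ k, branch v lam k z ∈ U (branch v lam k x) :=
      eventually_all.2 fun k => (continuous_branch v lam k).continuousAt.eventually (hU _)
    refine ⟨_, inter_mem hV hbranch, fun z hz w hw hzw ω ω' hω hω' => ?_⟩
    have hfirst : ω 0 = ω' 0 :=
      eq_of_mem_cone (hVcone z hz.1 w hw.1 hzw _ (hω 0 n.succ_pos)) (hω' 0 n.succ_pos)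
    rw [add_comm] at hω hω'
    have htail := hω'.shift
    simp only [wordOrbit, ← hfirst] at htail
    have hrest := hUω _ _ (hz.2 (ω 0)) _ (hw.2 (ω 0))
      (by rw [signPattern_branch v h0, signPattern_branch v h0, hzw]) _ _ hω.shift htail
    rintro (_ | i) hi
    · exact hfirst
    · rw [add_comm]
      exact hrest i (Nat.lt_of_succ_lt_succ hi)

theorem exists_mem_nhds_ncard_words_le (v : Fin d → ℂ) (h0 : 0 < lam) (n : ℕ) (x : ℂ) :
    ∃ U ∈ nhds x, (words v lam U n).ncard ≤ Nat.card (Fin d → Fin d → SignType) := by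
  obtain ⟨U, hU, hUω⟩ := exists_mem_nhds_eqOn_of_signPattern_eq v h0 n x
  refine ⟨U, hU, ?_⟩
  have hwords : ∀ u ∈ words v lam U n, ∃ ω, ∃ z ∈ U, Follows v lam ω z n ∧
      u = fun i : Fin n => ω i := fun _ hu => hu
  choose! ω z hz hω hu using hwords
  rw [← ncard_univ]
  refine ncard_le_ncard_of_injOn (fun u => signPattern v x (z u)) (fun _ _ => mem_univ _) ?_
  intro u hu₁ u' hu₂ huu'
  rw [hu u hu₁, hu u' hu₂]
  exact funext fun i => hUω _ (hz u hu₁) _ (hz u' hu₂) huu' _ _ (hω u hu₁) (hω u' hu₂) i i.2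

theorem exists_ncard_words_ball_le (v : Fin d → ℂ) (h0 : 0 < lam) (n : ℕ) {K : Set ℂ}
    (hK : IsCompact K) : ∃ δ > 0, ∀ x ∈ K,
      (words v lam (ball x δ) n).ncard ≤ Nat.card (Fin d → Fin d → SignType) := by
  choose U hU hUn using exists_mem_nhds_ncard_words_le v h0 n
  obtain ⟨δ, hδ, hball⟩ := uniformity_basis_dist.lebesgue_number_lemma_nhds hK fun x _ => hU x
  refine ⟨δ, hδ, fun x hx => ?_⟩
  obtain ⟨y, hy⟩ := hball x hx
  refine (ncard_le_ncard (words_mono fun z hz => hy ?_) (toFinite _)).trans (hUn y)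
  exact mem_ball'.1 hz

theorem ncard_le_mul_of_append {A : Type*} [Finite A] {S : ℕ} {W : Set (Fin (m + n) → A)}
    {W₁ : Set (Fin m → A)} {W₂ : (Fin m → A) → Set (Fin n → A)}
    (h₁ : ∀ u ∈ W, (fun i => u (Fin.castAdd n i)) ∈ W₁)
    (h₂ : ∀ u ∈ W, (fun i => u (Fin.natAdd m i)) ∈ W₂ fun i => u (Fin.castAdd n i))
    (hS : ∀ p ∈ W₁, (W₂ p).ncard ≤ S) : W.ncard ≤ W₁.ncard * S := by
  classical
  have := Fintype.ofFinite A
  rw [ncard_eq_toFinset_card', ncard_eq_toFinset_card', mul_comm]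
  refine Finset.card_le_mul_card_image_of_maps_to (f := fun u i => u (Fin.castAdd n i))
    (by simpa using h₁) _ fun p hp => ?_
  refine le_trans ?_ (hS p (mem_toFinset.1 hp))
  rw [ncard_eq_toFinset_card']
  refine Finset.card_le_card_of_injOn (fun u i => u (Fin.natAdd m i)) ?_ ?_
  · intro u hu
    obtain ⟨huW, rfl⟩ : u ∈ W ∧ (fun i => u (Fin.castAdd n i)) = p := by simpa using hu
    simpa using h₂ u huW
  · intro u hu u' hu' huu'
    have hp : (fun i => u (Fin.castAdd n i)) = p := (Finset.mem_filter.1 hu).2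
    have hp' : (fun i => u' (Fin.castAdd n i)) = p := (Finset.mem_filter.1 hu').2
    exact funext (Fin.addCases (congrFun (hp.trans hp'.symm)) (congrFun huu'))

theorem Absorbing.exists_ncard_words_add_le (h : Absorbing v lam R) (n : ℕ) :
    ∃ m₀, ∀ m ≥ m₀, (words v lam (closedBall 0 R) (m + n)).ncard ≤
      (words v lam (closedBall 0 R) m).ncard * Nat.card (Fin d → Fin d → SignType) := by
  obtain ⟨δ, hδ, hball⟩ :=
    exists_ncard_words_ball_le v h.pos n (isCompact_closedBall (0 : ℂ) R)
  have hlim : Tendsto (fun m => lam ^ m * (2 * R)) atTop (nhds 0) := by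
    simpa using (tendsto_pow_atTop_nhds_zero_of_lt_one h.pos.le h.lt_one).mul_const (2 * R)
  obtain ⟨m₀, hm₀⟩ := eventually_atTop.1 (hlim.eventually_lt_const hδ)
  refine ⟨m₀, fun m hm => ?_⟩
  have hcenter : ∀ p ∈ words v lam (closedBall 0 R) m, ∃ x ∈ closedBall (0 : ℂ) R,
      ∀ ω, (p = fun i : Fin m => ω i) →
        ∀ z ∈ closedBall (0 : ℂ) R, wordOrbit v lam ω z m ∈ ball x δ := by
    rintro _ ⟨ω, z, hz, -, rfl⟩
    refine ⟨_, h.wordOrbit_mem ω hz m, fun ω' hω' z' hz' => ?_⟩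
    rw [mem_ball, wordOrbit_congr v lam z fun i hi => congrFun hω' ⟨i, hi⟩,
      dist_wordOrbit_wordOrbit v h.pos.le]
    refine (mul_le_mul_of_nonneg_left ?_ (pow_nonneg h.pos.le m)).trans_lt (hm₀ m hm)
    linarith [dist_triangle_right z' z 0, mem_closedBall.1 hz, mem_closedBall.1 hz']
  choose! x hx hxδ using hcenter
  refine ncard_le_mul_of_append (W₂ := fun p => words v lam (ball (x p) δ) n) ?_ ?_
    fun p hp => hball _ (hx p hp)
  · rintro _ ⟨ω, z, hz, hω, rfl⟩
    exact ⟨ω, z, hz, hω.mono (m.le_add_right n), rfl⟩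
  · rintro _ ⟨ω, z, hz, hω, rfl⟩
    exact ⟨_, wordOrbit v lam ω z m,
      hxδ _ ⟨ω, z, hz, hω.mono (m.le_add_right n), rfl⟩ ω rfl z hz, hω.shift, rfl⟩

theorem exists_mul_pow_lt_one {a : ℕ → ℕ} {S : ℕ}
    (ha : ∀ n, ∃ m₀, ∀ m ≥ m₀, a (m + n) ≤ a m * S) {β : ℝ} (hβ : 0 < β) (hβ1 : β < 1) :
    ∃ N, a N * β ^ N < 1 := by
  have hS : Tendsto (fun n => (S : ℝ) * β ^ n) atTop (nhds 0) := by
    simpa using (tendsto_pow_atTop_nhds_zero_of_lt_one hβ.le hβ1).const_mul (S : ℝ)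
  obtain ⟨n, hn⟩ := (hS.eventually_lt_const one_pos).exists
  obtain ⟨m, hm⟩ := ha n
  have hle : ∀ l : ℕ, a (m + l * n) * β ^ (m + l * n) ≤ a m * β ^ m * (S * β ^ n) ^ l := fun l => by
    induction l with
    | zero => simp
    | succ l ih =>
      calc a (m + (l + 1) * n) * β ^ (m + (l + 1) * n)
          ≤ (a (m + l * n) * S : ℕ) * β ^ (m + (l + 1) * n) := by
            rw [add_one_mul, ← add_assoc]
            gcongr
            exact hm _ (m.le_add_right _)
        _ = a (m + l * n) * β ^ (m + l * n) * (S * β ^ n) := by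
          push_cast
          ring
        _ ≤ a m * β ^ m * (S * β ^ n) ^ l * (S * β ^ n) := by gcongr
        _ = a m * β ^ m * (S * β ^ n) ^ (l + 1) := by ring
  have hlim : Tendsto (fun l => a m * β ^ m * ((S : ℝ) * β ^ n) ^ l) atTop (nhds 0) := by
    simpa using (tendsto_pow_atTop_nhds_zero_of_lt_one (by positivity) hn).const_mul (a m * β ^ m)
  obtain ⟨l, hl⟩ := (hlim.eventually_lt_const one_pos).exists
  exact ⟨_, (hle l).trans_lt hl⟩

/-- The infinite words, read backwards in time, all of whose blocks of consecutive letters are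
followed by points of the closed ball of radius `R`. -/
def pastWords (v : Fin d → ℂ) (lam R : ℝ) : Set (ℕ → Fin d) :=
  {η | ∀ t N, (fun i : Fin N => η (t + i.rev)) ∈ words v lam (closedBall 0 R) N}

theorem Absorbing.hasSubexponentialComplexity_pastWords (h : Absorbing v lam R) :
    HasSubexponentialComplexity (pastWords v lam R) := fun β hβ hβ1 => by
  obtain ⟨N, hN⟩ := exists_mul_pow_lt_one (a := fun n => (words v lam (closedBall 0 R) n).ncard)
    h.exists_ncard_words_add_le hβ hβ1
  refine ⟨N, lt_of_le_of_lt ?_ hN⟩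
  have hsub : factors (pastWords v lam R) N ⊆ (· ∘ Fin.rev) '' words v lam (closedBall 0 R) N := by
    rintro _ ⟨η, hη, t, rfl⟩
    exact ⟨_, hη t N, funext fun i => congrArg (fun l : Fin N => η (t + l)) i.rev_rev⟩
  have hle := (ncard_le_ncard hsub (toFinite _)).trans (ncard_image_le (toFinite _))
  gcongr

/-! ### Words with two letters -/

theorem lineForm_apply_vertex_swap (v : Fin d → ℂ) (i j k : Fin d) :
    lineForm v i k (v j) = -lineForm v j k (v i) := by
  simp only [lineForm, cross, Complex.sub_re, Complex.sub_im]
  ring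

theorem lineForm_add_lineForm (v : Fin d → ℂ) (i j k : Fin d) (z : ℂ) :
    lineForm v i j z + lineForm v j k z = lineForm v i k z + lineForm v j k (v i) := by
  simp only [lineForm, cross, Complex.sub_re, Complex.sub_im]
  ring

theorem branch_notMem_cone (h0 : 0 ≤ lam) (hij : j ≠ i) (hz : z ∈ cone v i) :
    branch v lam i z ∉ cone v i := fun hz' => by
  have h1 := lineForm_pos_of_mem_cone hz hij
  have h2 := lineForm_pos_of_mem_cone hz' hij
  rw [lineForm_branch, lineForm_apply_left] at h2
  nlinarith

theorem lineForm_vertex_lt_of_branch_mem_cone (hki : k ≠ i) (hkj : k ≠ j)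
    (hz : z ∈ cone v i) (hz' : branch v lam i z ∈ cone v j) (h0 : 0 ≤ lam) :
    lineForm v i k (v j) < lam * lineForm v i j z := by
  have h1 := lineForm_pos_of_mem_cone hz hki
  have h2 := lineForm_pos_of_mem_cone hz' hkj
  rw [lineForm_branch] at h2
  have h3 := lineForm_add_lineForm v i j k z
  have h4 := lineForm_apply_vertex_swap v i j k
  nlinarith

theorem abs_lineForm_vertex_lt_of_mem_cone (h0 : 0 ≤ lam) (h1 : lam ≤ 1) (hki : k ≠ i) (hkj : k ≠ j)
    (hz : z ∈ cone v i) (hz' : branch v lam i z ∈ cone v j)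
    (hz'' : branch v lam j (branch v lam i z) ∈ cone v i) :
    |lineForm v i k (v j)| < lam * |lineForm v i j z| := by
  have hji : j ≠ i := by
    rintro rfl
    exact branch_notMem_cone h0 hki hz hz'
  have hpos := lineForm_pos_of_mem_cone hz hji
  have hlt := lineForm_vertex_lt_of_branch_mem_cone hki hkj hz hz' h0
  have hlt' := lineForm_vertex_lt_of_branch_mem_cone hkj hki hz' hz'' h0
  rw [lineForm_branch, lineForm_apply_right, lineForm_swap v j i, ← neg_eq_iff_eq_neg.2
    (lineForm_apply_vertex_swap v i j k)] at hlt'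
  rw [abs_of_pos hpos, abs_lt]
  constructor <;> nlinarith [mul_nonneg h0 hpos.le]

theorem lineForm_wordOrbit_of_forall_eq_or_eq (h : ∀ s < n, ω s = k ∨ ω s = j) :
    lineForm v k j (wordOrbit v lam ω z n) = (-lam) ^ n * lineForm v k j z := by
  rw [lineForm_wordOrbit, Finset.sum_eq_zero, mul_zero, add_zero]
  intro s hs
  rcases h (n - 1 - s) (by have := Finset.mem_range.1 hs; omega) with hk | hj
  · rw [hk, lineForm_apply_left, zero_mul]
  · rw [hj, lineForm_apply_right, zero_mul]

theorem Follows.abs_lineForm_vertex_lt (h : Follows v lam ω z (n + 3)) (h0 : 0 ≤ lam)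
    (h1 : lam ≤ 1) (hω : ∀ s < n + 3, ω s = k ∨ ω s = j) (hik : i ≠ k) (hij : i ≠ j) :
    |lineForm v k i (v j)| < lam ^ (n + 1) * |lineForm v k j z| := by
  wlog hk : ω n = k generalizing k j
  · have := this (fun s hs => (hω s hs).symm) hij hik ((hω n (by omega)).resolve_left hk)
    rwa [lineForm_apply_vertex_swap, lineForm_swap v j k, abs_neg, abs_neg] at this
  have hz := h n (by omega)
  have hz' := h (n + 1) (by omega)
  have hz'' := h (n + 2) (by omega)
  simp only [wordOrbit] at hz' hz''
  have hj : ω (n + 1) = j := (hω _ (by omega)).resolve_left fun hk' => by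
    rw [hk', hk] at hz'
    exact branch_notMem_cone h0 hik (hk ▸ hz) hz'
  have hk' : ω (n + 2) = k := (hω _ (by omega)).resolve_right fun hj' => by
    rw [hj', hj] at hz''
    exact branch_notMem_cone h0 hij (hj ▸ hz') hz''
  rw [hk] at hz hz' hz''
  rw [hj] at hz' hz''
  rw [hk'] at hz''
  calc |lineForm v k i (v j)| < lam * |lineForm v k j (wordOrbit v lam ω z n)| :=
        abs_lineForm_vertex_lt_of_mem_cone h0 h1 hik hij hz hz' hz''
    _ = lam ^ (n + 1) * |lineForm v k j z| := by
      rw [lineForm_wordOrbit_of_forall_eq_or_eq fun s hs => hω s (by omega), abs_mul, abs_pow,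
        abs_neg, abs_of_nonneg h0]
      ring

/-- No three vertices with distinct labels lie on a line. -/
def NoThreeCollinear (v : Fin d → ℂ) : Prop :=
  ∀ i j k, i ≠ j → i ≠ k → j ≠ k → lineForm v i j (v k) ≠ 0

theorem Absorbing.exists_ne_of_mem_pastWords (h : Absorbing v lam R) (hd : 3 ≤ d)
    (hv : NoThreeCollinear v) (hkj : k ≠ j) {η : ℕ → Fin d} (hη : η ∈ pastWords v lam R) :
    ∃ s, η s ≠ k ∧ η s ≠ j := by
  by_contra! hcon
  obtain ⟨i, hik, hij⟩ := Fin.exists_ne_and_ne_of_two_lt k j hd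
  refine (abs_pos.2 (hv k i j hik.symm hkj hij)).not_ge ?_
  have hbound : ∀ n, |lineForm v k i (v j)| ≤ lam ^ (n + 1) * (4 * R ^ 2) := fun n => by
    obtain ⟨ω, z, hz, hω, hηω⟩ := hη 0 (n + 3)
    have hletter : ∀ s < n + 3, ω s = k ∨ ω s = j := fun s hs => by
      rw [← congrFun hηω ⟨s, hs⟩]
      exact or_iff_not_imp_left.2 (hcon _)
    exact (hω.abs_lineForm_vertex_lt h.pos.le h.lt_one.le hletter hik hij).le.trans
      (mul_le_mul_of_nonneg_left (h.abs_lineForm_le hz k j) (pow_nonneg h.pos.le _))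
  have hlim := ((tendsto_add_atTop_iff_nat 1).2
    (tendsto_pow_atTop_nhds_zero_of_lt_one h.pos.le h.lt_one)).mul_const (4 * R ^ 2)
  rw [zero_mul] at hlim
  exact ge_of_tendsto' hlim hbound

/-! ### Limits of words -/

theorem exists_forall_exists_eqOn {A B : Type*} [Finite A] [Finite B] (ρ : ℕ → ℕ → A) (b : ℕ → B) :
    ∃ (η : ℕ → A) (b₀ : B), ∀ M, ∃ n ≥ M, b n = b₀ ∧ ∀ s < M, ρ n s = η s := by
  let _ : TopologicalSpace A := ⊥
  let _ : TopologicalSpace B := ⊥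
  have : DiscreteTopology A := ⟨rfl⟩
  have : DiscreteTopology B := ⟨rfl⟩
  obtain ⟨⟨η, b₀⟩, hη⟩ := exists_clusterPt_of_compactSpace (map (fun n => (ρ n, b n)) atTop)
  refine ⟨η, b₀, fun M => ?_⟩
  have hopen : ∀ᶠ p : (ℕ → A) × B in nhds (η, b₀), p.2 = b₀ ∧ ∀ s < M, p.1 s = η s := by
    have hb : IsOpen {p : (ℕ → A) × B | p.2 = b₀} :=
      (isOpen_discrete {b₀}).preimage continuous_snd
    have hs : ∀ s, IsOpen {p : (ℕ → A) × B | p.1 s = η s} := fun s =>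
      (isOpen_discrete {η s}).preimage (f := fun p : (ℕ → A) × B => p.1 s) (by fun_prop)
    exact Eventually.and (hb.eventually_mem rfl)
      ((finite_lt_nat M).eventually_all.2 fun s _ => (hs s).eventually_mem rfl)
  obtain ⟨n, hn, hM⟩ := ((mapClusterPt_iff_frequently.1 hη _ hopen).and_eventually
    (eventually_ge_atTop M)).exists
  exact ⟨n, hM, hn⟩

theorem mem_pastWords_of_follows (h : Absorbing v lam R) {η : ℕ → Fin d}
    (hη : ∀ M, ∃ n ≥ M, ∃ ω, (∃ z ∈ closedBall (0 : ℂ) R, Follows v lam ω z n) ∧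
      ∀ s < M, ω (n - 1 - s) = η s) : η ∈ pastWords v lam R := fun t N => by
  obtain ⟨n, hn, ω, ⟨z, hz, hω⟩, hωη⟩ := hη (t + N)
  obtain ⟨l, rfl⟩ := Nat.exists_eq_add_of_le hn
  rw [show t + N + l = l + N + t by ring] at hω
  refine ⟨_, _, h.wordOrbit_mem ω hz l, (hω.mono (Nat.le_add_right _ t)).shift, funext fun i => ?_⟩
  rw [← hωη _ (by omega), Fin.val_rev]
  congr 1
  omega

namespace Absorbing

theorem abs_sum_lineForm_le (h : Absorbing v lam R) (hz : z ∈ closedBall (0 : ℂ) R)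
    (hlt : |lineForm v k j (wordOrbit v lam ω z n)| < lam ^ n) :
    |∑ s ∈ Finset.range n, lineForm v k j (v (ω (n - 1 - s))) * (-lam) ^ s| ≤
      (1 + 4 * R ^ 2) * lam ^ n := by
  have hlam : 0 < 1 + lam := by linarith [h.pos]
  rw [lineForm_wordOrbit] at hlt
  set S := ∑ s ∈ Finset.range n, lineForm v k j (v (ω (n - 1 - s))) * (-lam) ^ s
  set r := (-lam) ^ n * lineForm v k j z
  have hr : |r| ≤ lam ^ n * (4 * R ^ 2) := by
    rw [abs_mul, abs_pow, abs_neg, abs_of_pos h.pos]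
    exact mul_le_mul_of_nonneg_left (h.abs_lineForm_le hz k j) (pow_nonneg h.pos.le n)
  calc |S| ≤ (1 + lam) * |S| := le_mul_of_one_le_left (abs_nonneg S) (by linarith [h.pos])
    _ = |(r + (1 + lam) * S) - r| := by rw [add_sub_cancel_left, abs_mul, abs_of_pos hlam]
    _ ≤ |r + (1 + lam) * S| + |r| := abs_sub _ _
    _ ≤ (1 + 4 * R ^ 2) * lam ^ n := by linarith

theorem abs_seriesSum_le (h : Absorbing v lam R) (hz : z ∈ closedBall (0 : ℂ) R)
    (hlt : |lineForm v k j (wordOrbit v lam ω z n)| < lam ^ n) (hmn : m ≤ n) {η : ℕ → Fin d}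
    (hη : ∀ s < m, ω (n - 1 - s) = η s) :
    |seriesSum (fun s => lineForm v k j (v (η s))) (-lam)| ≤
      (3 * (4 * R ^ 2 / (1 - lam)) + (1 + 4 * R ^ 2)) * lam ^ m := by
  have hc : ∀ i, |lineForm v k j (v i)| ≤ 4 * R ^ 2 := fun i =>
    h.abs_lineForm_le (mem_closedBall_zero_iff.2 (h.norm_vertex_le i)) k j
  have hx : |-lam| ≤ lam := by rw [abs_neg, abs_of_pos h.pos]
  set f := seriesSum (fun s => lineForm v k j (v (η s))) (-lam)
  set g := seriesSum (fun s => lineForm v k j (v (ω (n - 1 - s)))) (-lam)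
  set S := ∑ s ∈ Finset.range n, lineForm v k j (v (ω (n - 1 - s))) * (-lam) ^ s
  have hfg : |f - g| ≤ 2 * (4 * R ^ 2 / (1 - lam) * lam ^ m) :=
    abs_seriesSum_sub_seriesSum_le (fun _ => hc _) (fun _ => hc _) hx h.lt_one
      fun s hs => by rw [hη s hs]
  have hgS : |g - S| ≤ 4 * R ^ 2 / (1 - lam) * lam ^ n :=
    abs_seriesSum_sub_sum_range_le (fun _ => hc _) hx h.lt_one n
  have h1 : 0 < 1 - lam := sub_pos.2 h.lt_one
  have hpow : lam ^ n ≤ lam ^ m := pow_le_pow_of_le_one h.pos.le h.lt_one.le hmn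
  calc |f| = |(f - g) + (g - S) + S| := by ring_nf
    _ ≤ |f - g| + |g - S| + |S| := abs_add_three _ _ _
    _ ≤ 2 * (4 * R ^ 2 / (1 - lam) * lam ^ m) + 4 * R ^ 2 / (1 - lam) * lam ^ m +
        (1 + 4 * R ^ 2) * lam ^ m := by
      gcongr
      · exact hgS.trans (by gcongr)
      · exact (h.abs_sum_lineForm_le hz hlt).trans (by gcongr)
    _ = (3 * (4 * R ^ 2 / (1 - lam)) + (1 + 4 * R ^ 2)) * lam ^ m := by ring

theorem exists_pastWords_seriesSum_eq_zero (h : Absorbing v lam R)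
    (hsing : ∀ n, NearSingular v lam R n) : ∃ η ∈ pastWords v lam R, ∃ k j, k ≠ j ∧
      seriesSum (fun s => lineForm v k j (v (η s))) (-lam) = 0 := by
  choose ω z hz k j hkj hω hlt using hsing
  obtain ⟨η, ⟨k₀, j₀⟩, hη⟩ :=
    exists_forall_exists_eqOn (fun n s => ω n (n - 1 - s)) fun n => (k n, j n)
  simp only [Prod.mk.injEq] at hη
  refine ⟨η, mem_pastWords_of_follows h fun M => ?_, k₀, j₀, ?_, ?_⟩
  · obtain ⟨n, hn, -, hωη⟩ := hη M
    exact ⟨n, hn, ω n, ⟨z n, hz n, hω n⟩, hωη⟩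
  · obtain ⟨n, -, ⟨rfl, rfl⟩, -⟩ := hη 0
    exact hkj n
  · have hbound : ∀ M, |seriesSum (fun s => lineForm v k₀ j₀ (v (η s))) (-lam)| ≤
        (3 * (4 * R ^ 2 / (1 - lam)) + (1 + 4 * R ^ 2)) * lam ^ M := fun M => by
      obtain ⟨n, hn, ⟨rfl, rfl⟩, hωη⟩ := hη M
      exact h.abs_seriesSum_le (hz n) (hlt n) hn hωη
    have hlim := (tendsto_pow_atTop_nhds_zero_of_lt_one h.pos.le h.lt_one).const_mul
      (3 * (4 * R ^ 2 / (1 - lam)) + (1 + 4 * R ^ 2))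
    rw [mul_zero] at hlim
    exact abs_nonpos_iff.1 (ge_of_tendsto' hlim hbound)

end Absorbing

/-! ### Null sets of parameters -/

theorem continuous_wordOrbit_param (ω : ℕ → Fin d) (z : ℂ) (n : ℕ) :
    Continuous fun q : (Fin d → ℂ) × ℝ => wordOrbit q.1 q.2 ω z n := by
  induction n with
  | zero => exact continuous_const
  | succ n ih =>
    simp only [wordOrbit, branch]
    fun_prop

theorem continuous_lineForm_wordOrbit_param (ω : ℕ → Fin d) (z : ℂ) (n : ℕ) (k j : Fin d) :
    Continuous fun q : (Fin d → ℂ) × ℝ => lineForm q.1 k j (wordOrbit q.1 q.2 ω z n) := by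
  have := continuous_wordOrbit_param ω z n
  unfold lineForm cross
  fun_prop

theorem isOpen_setOfPred_follows (ω : ℕ → Fin d) (z : ℂ) (n : ℕ) :
    IsOpen {q : (Fin d → ℂ) × ℝ | Follows q.1 q.2 ω z n} := by
  have h : {q : (Fin d → ℂ) × ℝ | Follows q.1 q.2 ω z n} =
      ⋂ i ∈ Iio n, ⋂ j ∈ ({ω i}ᶜ : Set (Fin d)),
        {q | 0 < lineForm q.1 (ω i) j (wordOrbit q.1 q.2 ω z i)} := by
    ext q
    simp [Follows, cone, lineForm]
  rw [h]
  exact (finite_Iio n).isOpen_biInter fun i _ => (toFinite _).isOpen_biInter fun j _ =>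
    isOpen_lt continuous_const (continuous_lineForm_wordOrbit_param ω z i _ j)

theorem isOpen_setOfPred_nearSingular (R : ℝ) (n : ℕ) :
    IsOpen {q : (Fin d → ℂ) × ℝ | NearSingular q.1 q.2 R n} := by
  simp only [NearSingular, ofPred_exists, ofPred_and]
  exact isOpen_iUnion fun ω => isOpen_iUnion fun z => isOpen_const.inter <|
    isOpen_iUnion fun k => isOpen_iUnion fun j => isOpen_const.inter <|
      (isOpen_setOfPred_follows ω z n).inter <|
        isOpen_lt (continuous_lineForm_wordOrbit_param ω z n k j).abs (by fun_prop)

theorem isOpen_setOfPred_absorbing (R : ℝ) :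
    IsOpen {q : (Fin d → ℂ) × ℝ | Absorbing q.1 q.2 R} := by
  have h : {q : (Fin d → ℂ) × ℝ | Absorbing q.1 q.2 R} =
      {q | 0 < q.2} ∩ ({q | q.2 < 1} ∩ ⋂ i, {q | (1 + q.2) * ‖q.1 i‖ < (1 - q.2) * R}) := by
    ext q
    simp only [mem_inter_iff, mem_iInter, mem_ofPred_eq]
    exact ⟨fun h => ⟨h.pos, h.lt_one, h.norm_lt⟩, fun ⟨h0, h1, hR⟩ => ⟨h0, h1, hR⟩⟩
  rw [h]
  exact (isOpen_lt (by fun_prop) (by fun_prop)).inter <|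
    (isOpen_lt (by fun_prop) (by fun_prop)).inter <|
      isOpen_iInter_of_finite fun i => isOpen_lt (by fun_prop) (by fun_prop)

theorem ae_lineForm_apply_vertex_ne_zero (hij : i ≠ j) (hik : i ≠ k) (hjk : j ≠ k) :
    ∀ᵐ v : Fin d → ℂ, lineForm v i j (v k) ≠ 0 := by
  have hopen : IsOpen {v : Fin d → ℂ | lineForm v i j (v k) ≠ 0} := by
    refine isOpen_ne_fun ?_ continuous_const
    unfold lineForm cross
    fun_prop
  -- Moving `v i` and `v j` in the directions `1` and `I` makes the value of the form a quadratic
  -- polynomial in time with leading coefficient `1`.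
  let u : Fin d → ℂ := Pi.single i 1 + Pi.single j Complex.I
  refine ae_mem_of_ae_add_linearMap_mem (LinearMap.toSpanSingleton ℝ (Fin d → ℂ) u) volume volume
    hopen.measurableSet fun v => ?_
  let p : Polynomial ℝ := .X ^ 2 + .C ((v i - v k).re + (v j - v k).im) * .X +
    .C (lineForm v i j (v k))
  have hp : p ≠ 0 := (by unfold p; monicity! : p.Monic).ne_zero
  filter_upwards [(p.finite_setOfPred_isRoot hp).countable.ae_notMem volume] with t ht
  convert ht using 1
  simp [p, u, lineForm, cross, hij, hij.symm, hik.symm, hjk.symm]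
  ring_nf

theorem ae_noThreeCollinear (d : ℕ) : ∀ᵐ v : Fin d → ℂ, NoThreeCollinear v := by
  simp only [NoThreeCollinear, eventually_all]
  exact fun i j k hij hik hjk => ae_lineForm_apply_vertex_ne_zero hij hik hjk

theorem volume_setOfPred_absorbing_and_nearSingular (hd : 3 ≤ d) (hv : NoThreeCollinear v) (R : ℝ) :
    volume {x | Absorbing v x R ∧ ∀ n, NearSingular v x R n} = 0 := by
  let Z (k j : Fin d) : Set ℝ := {x | |x| < 1 ∧
    HasSubexponentialComplexity (pastWords v (-x) R) ∧
    ∃ η ∈ pastWords v (-x) R, (∃ n, lineForm v k j (v (η n)) ≠ 0) ∧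
      seriesSum (fun n => lineForm v k j (v (η n))) x = 0}
  have hZ : volume (⋃ k, ⋃ j, Neg.neg ⁻¹' Z k j) = 0 :=
    measure_iUnion_null fun k => measure_iUnion_null fun j => by
      rw [Measure.measure_preimage_neg]
      exact volume_setOfPred_exists_seriesSum_eq_zero (fun i => lineForm v k j (v i)) fun x =>
        pastWords v (-x) R
  refine measure_mono_null ?_ hZ
  rintro x ⟨h, hsing⟩
  obtain ⟨η, hη, k, j, hkj, h0⟩ := h.exists_pastWords_seriesSum_eq_zero hsing
  obtain ⟨s, hk, hj⟩ := h.exists_ne_of_mem_pastWords hd hv hkj hη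
  have hx : |-x| < 1 := h.abs_neg_lt_one
  simp only [mem_iUnion]
  refine ⟨k, j, hx, ?_, η, ?_, ⟨s, hv k j _ hkj hk.symm hj.symm⟩, h0⟩
  · simpa using h.hasSubexponentialComplexity_pastWords
  · simpa using hη

theorem ae_not_absorbing_and_nearSingular (hd : 3 ≤ d) (R : ℝ) : ∀ᵐ q : (Fin d → ℂ) × ℝ,
    ¬(Absorbing q.1 q.2 R ∧ ∀ n, NearSingular q.1 q.2 R n) := by
  have hmeas : MeasurableSet {q : (Fin d → ℂ) × ℝ |
      ¬(Absorbing q.1 q.2 R ∧ ∀ n, NearSingular q.1 q.2 R n)} := by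
    refine ((isOpen_setOfPred_absorbing R).measurableSet.inter ?_).compl
    change MeasurableSet {q : (Fin d → ℂ) × ℝ | ∀ n, NearSingular q.1 q.2 R n}
    simp only [ofPred_forall]
    exact .iInter fun n => (isOpen_setOfPred_nearSingular R n).measurableSet
  refine (Measure.ae_prod_iff_ae_ae hmeas).2 ?_
  filter_upwards [ae_noThreeCollinear d] with v hv
  rw [ae_iff]
  simpa using volume_setOfPred_absorbing_and_nearSingular hd hv R

end Billiard

theorem outer_billiard_asymptotically_periodic_ae_general (d : ℕ) (hd : 3 ≤ d) :
    ∀ᵐ q : (Fin d → ℂ) × ℝ, q.2 ∈ Set.Ioo (0 : ℝ) 1 → AsymptoticallyPeriodic q.1 q.2 := by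
  have : NeZero d := ⟨by omega⟩
  filter_upwards [ae_all_iff.2 fun R : ℕ => ae_not_absorbing_and_nearSingular hd R] with q hq hlam
  by_contra hper
  obtain ⟨R, h⟩ := exists_nat_absorbing q.1 hlam.1 hlam.2
  exact hq R ⟨h, h.nearSingular hper⟩

/-- For almost every pair `(P, λ) ∈ 𝒫_d × (0,1)` (w.r.t. Lebesgue measure on
`ℂ^d × ℝ`), the outer billiard map of `P` with contraction `λ` is asymptotically
periodic. -/
theorem outer_billiard_asymptotically_periodic_ae (d : ℕ) [NeZero d] (hd : 3 ≤ d) :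
    volume {q : (Fin d → ℂ) × ℝ | IsConvexPolygon q.1 ∧ q.2 ∈ Set.Ioo (0 : ℝ) 1 ∧
      ¬ AsymptoticallyPeriodic q.1 q.2} = 0 := by
  refine measure_mono_null ?_ (ae_iff.1 (outer_billiard_asymptotically_periodic_ae_general d hd))
  exact fun _ hq hper => hq.2.2 (hper hq.2.1)
end
end

section
/- For every (P, λ) ∈ Δ_ε and every integer n ≥ 1, the set Λ_ε(P,λ) is contained in the union, over all itineraries i ∈ I_n^ε, of the closed discs of radius 2 r_ε a_ε^n centred at the points H(P,λ,i). -/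
open MeasureTheory Set Filter Metric

noncomputable section

/-- The `ε`-neighbourhood `Δ_ε = B_ε(P') × (λ'-ε, λ'+ε)` of `(P', λ')`. -/
def Delta {d : ℕ} (v' : Fin d → ℂ) (l' ε : ℝ) : Set ((Fin d → ℂ) × ℝ) :=
  Metric.ball v' ε ×ˢ Set.Ioo (l' - ε) (l' + ε)

/-- `a_ε = λ' + ε`. -/
def aEps (l' ε : ℝ) : ℝ := l' + ε

/-- `b_ε = sup {‖P‖ : P ∈ B_ε(P')}` (sup-norm of the vertex tuple). -/
def bEps {d : ℕ} (v' : Fin d → ℂ) (ε : ℝ) : ℝ :=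
  sSup ((fun w : Fin d → ℂ => ‖w‖) '' Metric.ball v' ε)

/-- `r_ε = b_ε (1+a_ε)/(1-a_ε)²`. -/
def rEps {d : ℕ} (v' : Fin d → ℂ) (l' ε : ℝ) : ℝ :=
  bEps v' ε * (1 + aEps l' ε) / (1 - aEps l' ε) ^ 2

/-- `K_ε`: the closed disc of radius `r_ε` centred at the origin. -/
def Keps {d : ℕ} (v' : Fin d → ℂ) (l' ε : ℝ) : Set ℂ :=
  Metric.closedBall (0 : ℂ) (rEps v' l' ε)

/-- `(i 0, …, i (n-1))` is an admissible itinerary of order `n` of `T_{w,lam}`, the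
cones being restricted to `K_ε`: the corresponding intersection
`A_{i_0} ∩ T⁻¹(A_{i_1}) ∩ ⋯ ∩ T^{-(n-1)}(A_{i_{n-1}})` is non-empty. -/
def Admissible {d : ℕ} (v' : Fin d → ℂ) (l' ε : ℝ) (w : Fin d → ℂ) (lam : ℝ)
    {n : ℕ} (i : Fin n → Fin d) : Prop :=
  ∃ z : ℂ, ∀ j : Fin n, (billiardMap w lam)^[(j : ℕ)] z ∈ cone w (i j) ∩ Keps v' l' ε

/-- `I_n^ε`: the itineraries of order `n` admissible for some `(P, λ) ∈ Δ_ε`. -/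
def ItinSet {d : ℕ} (v' : Fin d → ℂ) (l' ε : ℝ) (n : ℕ) : Set (Fin n → Fin d) :=
  {i | ∃ q ∈ Delta v' l' ε, Admissible v' l' ε q.1 q.2 i}

/-- `H(P, λ, i) = (1+λ) ∑_{j=0}^{n-1} (-λ)^{n-j-1} v_{i_j}`. -/
def Hpt {d : ℕ} (w : Fin d → ℂ) (lam : ℝ) {n : ℕ} (i : Fin n → Fin d) : ℂ :=
  (1 + (lam : ℂ)) * ∑ j : Fin n, (-(lam : ℂ)) ^ (n - (j : ℕ) - 1) * w (i j)

/-- The limit set `Λ_ε(P,λ) = ⋂_{m ≥ 1} closure (⋃_{n ≥ m} {H(P,λ,i) : i ∈ I_n^ε})`. -/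
def LamSet {d : ℕ} (v' : Fin d → ℂ) (l' ε : ℝ) (w : Fin d → ℂ) (lam : ℝ) : Set ℂ :=
  ⋂ m : ℕ, ⋂ (_ : 1 ≤ m),
    closure {z : ℂ | ∃ n : ℕ, m ≤ n ∧ ∃ i ∈ ItinSet v' l' ε n, Hpt w lam i = z}

/-- `ω(P,λ)`: the union of the ω-limit sets of all non-singular points. -/
def omegaUnion {d : ℕ} (w : Fin d → ℂ) (lam : ℝ) : Set ℂ :=
  ⋃ z : ℂ, ⋃ (_ : NonSingular w lam z), omegaSet (billiardMap w lam) z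

/-!
Deleting the first `k` letters of an itinerary `i` of length `k + n` leaves an itinerary in `I_n^ε`
and moves `H(P, λ, i)` by `(-λ) ^ n` times the value of `H` at the deleted prefix. All values of `H`
lie in the disc of radius `r_ε`, because it contains a smaller disc around the origin that is
invariant under every branch `z ↦ -λ z + (1 + λ) v_k`. As there are finitely many itineraries of
order `n`, the union of the discs is closed, so it also contains the limit set.
-/

section

variable {d k n : ℕ} {w vP : Fin d → ℂ} {lam lP ε : ℝ} {q : (Fin d → ℂ) × ℝ}

theorem Hpt_zero (w : Fin d → ℂ) (lam : ℝ) (i : Fin 0 → Fin d) : Hpt w lam i = 0 := by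
  simp only [Hpt, Finset.univ_eq_empty, Finset.sum_empty, mul_zero]

theorem Hpt_succ (w : Fin d → ℂ) (lam : ℝ) (i : Fin (n + 1) → Fin d) :
    Hpt w lam i = -(lam : ℂ) * Hpt w lam (i ∘ Fin.castSucc) +
      (1 + (lam : ℂ)) * w (i (Fin.last n)) := by
  have shift_exponent (j : Fin n) : n + 1 - (j : ℕ) - 1 = (n - (j : ℕ) - 1) + 1 := by omega
  simp only [Hpt, Fin.sum_univ_castSucc, Fin.val_castSucc, Fin.val_last, shift_exponent,
    pow_succ', mul_assoc, ← Finset.mul_sum, Function.comp_apply, Nat.add_sub_cancel_left,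
    Nat.sub_self, pow_zero]
  ring

theorem Hpt_add (w : Fin d → ℂ) (lam : ℝ) (i : Fin (k + n) → Fin d) :
    Hpt w lam i = (-(lam : ℂ)) ^ n * Hpt w lam (i ∘ Fin.castAdd n) +
      Hpt w lam (i ∘ Fin.natAdd k) := by
  induction n with
  | zero =>
    rw [Hpt_zero w lam (i ∘ Fin.natAdd k), pow_zero, one_mul]
    exact (add_zero _).symm
  | succ n ih =>
    calc Hpt w lam i
        = -(lam : ℂ) * Hpt w lam (i ∘ Fin.castSucc) +
            (1 + (lam : ℂ)) * w (i (Fin.last (k + n))) := Hpt_succ w lam i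
      _ = (-(lam : ℂ)) ^ (n + 1) * Hpt w lam (i ∘ Fin.castAdd (n + 1)) +
            (-(lam : ℂ) * Hpt w lam ((i ∘ Fin.natAdd k) ∘ Fin.castSucc) +
              (1 + (lam : ℂ)) * w (i (Fin.natAdd k (Fin.last n)))) := by
          rw [ih (i ∘ Fin.castSucc), mul_add, ← mul_assoc, ← pow_succ', add_assoc]
          rfl
      _ = _ := by rw [Hpt_succ w lam (i ∘ Fin.natAdd k)]; rfl

theorem norm_Hpt_le (hlam : |lam| < 1) (w : Fin d → ℂ) (i : Fin n → Fin d) :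
    ‖Hpt w lam i‖ ≤ (1 + |lam|) / (1 - |lam|) * ‖w‖ := by
  have hlam' : 0 < 1 - |lam| := sub_pos.2 hlam
  induction n with
  | zero => rw [Hpt_zero, norm_zero]; positivity
  | succ n ih =>
    have norm_lam : ‖(lam : ℂ)‖ = |lam| := Complex.norm_real lam
    have norm_one_add_lam : ‖1 + (lam : ℂ)‖ ≤ 1 + |lam| := by
      simpa only [norm_one, norm_lam] using norm_add_le (1 : ℂ) lam
    calc ‖Hpt w lam i‖
        ≤ |lam| * ‖Hpt w lam (i ∘ Fin.castSucc)‖ + ‖1 + (lam : ℂ)‖ * ‖w (i (Fin.last n))‖ := by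
          rw [Hpt_succ, ← norm_lam, ← norm_neg (lam : ℂ), ← norm_mul, ← norm_mul]
          exact norm_add_le _ _
      _ ≤ |lam| * ((1 + |lam|) / (1 - |lam|) * ‖w‖) + (1 + |lam|) * ‖w‖ := by
          gcongr
          · exact ih _
          · exact norm_le_pi_norm w _
      _ = (1 + |lam|) / (1 - |lam|) * ‖w‖ := by field_simp; ring

theorem dist_Hpt_comp_natAdd (w : Fin d → ℂ) (lam : ℝ) (i : Fin (k + n) → Fin d) :
    dist (Hpt w lam i) (Hpt w lam (i ∘ Fin.natAdd k)) =
      |lam| ^ n * ‖Hpt w lam (i ∘ Fin.castAdd n)‖ := by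
  rw [dist_eq_norm, Hpt_add, add_sub_cancel_right, norm_mul, norm_pow, norm_neg,
    Complex.norm_real, Real.norm_eq_abs]

theorem Admissible.comp_natAdd {i : Fin (k + n) → Fin d} (hi : Admissible vP lP ε w lam i) :
    Admissible vP lP ε w lam (i ∘ Fin.natAdd k) := by
  obtain ⟨z, hz⟩ := hi
  refine ⟨(billiardMap w lam)^[k] z, fun j => ?_⟩
  rw [← Function.iterate_add_apply, add_comm (j : ℕ) k]
  exact hz (Fin.natAdd k j)

theorem comp_natAdd_mem_ItinSet {i : Fin (k + n) → Fin d} (hi : i ∈ ItinSet vP lP ε (k + n)) :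
    i ∘ Fin.natAdd k ∈ ItinSet vP lP ε n := by
  obtain ⟨p, hp, hadm⟩ := hi
  exact ⟨p, hp, hadm.comp_natAdd⟩

theorem norm_le_bEps (hw : w ∈ ball vP ε) : ‖w‖ ≤ bEps vP ε :=
  le_csSup (lipschitzWith_one_norm.isBounded_image isBounded_ball).bddAbove (mem_image_of_mem _ hw)

theorem bEps_nonneg (vP : Fin d → ℂ) (ε : ℝ) : 0 ≤ bEps vP ε :=
  Real.sSup_nonneg (forall_mem_image.2 fun w _ => norm_nonneg w)

theorem rEps_mul_aEps_pow_nonneg (vP : Fin d → ℂ) (ha : 0 ≤ aEps lP ε) (n : ℕ) :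
    0 ≤ rEps vP lP ε * aEps lP ε ^ n := by
  have hb : 0 ≤ bEps vP ε := bEps_nonneg vP ε
  unfold rEps
  positivity

theorem abs_snd_lt_aEps (hlP : 0 ≤ lP) (hq : q ∈ Delta vP lP ε) : |q.2| < aEps lP ε := by
  obtain ⟨-, hlow, hupp⟩ := hq
  exact abs_lt.2 ⟨by unfold aEps; linarith, hupp⟩

theorem norm_Hpt_le_rEps (hlP : 0 ≤ lP) (ha : aEps lP ε < 1) (hq : q ∈ Delta vP lP ε)
    (i : Fin n → Fin d) : ‖Hpt q.1 q.2 i‖ ≤ rEps vP lP ε := by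
  have hlam : |q.2| < aEps lP ε := abs_snd_lt_aEps hlP hq
  have ha₀ : 0 ≤ aEps lP ε := (abs_nonneg _).trans hlam.le
  have ha₁ : 0 < 1 - aEps lP ε := sub_pos.2 ha
  have sq_le : (1 - aEps lP ε) ^ 2 ≤ 1 - |q.2| :=
    (pow_le_of_le_one ha₁.le (by linarith) two_ne_zero).trans (by linarith)
  calc ‖Hpt q.1 q.2 i‖
      ≤ (1 + |q.2|) / (1 - |q.2|) * ‖q.1‖ := norm_Hpt_le (hlam.trans ha) q.1 i
    _ ≤ (1 + aEps lP ε) / (1 - aEps lP ε) ^ 2 * bEps vP ε := by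
        gcongr
        exact norm_le_bEps hq.1
    _ = rEps vP lP ε := by rw [rEps]; ring

theorem LamSet_subset_of_isClosed {C : Set ℂ} (hC : IsClosed C) (n : ℕ)
    (hH : ∀ m, n ≤ m → ∀ i ∈ ItinSet vP lP ε m, Hpt w lam i ∈ C) : LamSet vP lP ε w lam ⊆ C := by
  refine (iInter₂_subset (n + 1) n.succ_pos).trans (closure_minimal ?_ hC)
  rintro _ ⟨m, hm, i, hi, rfl⟩
  exact hH m (n.le_succ.trans hm) i hi

end

theorem LamSet_subset_union_closedBall_general {d : ℕ} {vP : Fin d → ℂ} {lP ε : ℝ}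
    (hlP : 0 ≤ lP) (ha : aEps lP ε < 1) {q : (Fin d → ℂ) × ℝ} (hq : q ∈ Delta vP lP ε) (n : ℕ) :
    LamSet vP lP ε q.1 q.2 ⊆
      ⋃ i ∈ ItinSet vP lP ε n, closedBall (Hpt q.1 q.2 i) (rEps vP lP ε * aEps lP ε ^ n) := by
  refine LamSet_subset_of_isClosed
    ((toFinite (ItinSet vP lP ε n)).isClosed_biUnion fun _ _ => isClosed_closedBall) n ?_
  intro m hm i hi
  obtain ⟨k, rfl⟩ := Nat.exists_eq_add_of_le' hm
  refine mem_iUnion₂.2 ⟨i ∘ Fin.natAdd k, comp_natAdd_mem_ItinSet hi, mem_closedBall.2 ?_⟩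
  have hlam : |q.2| ≤ aEps lP ε := (abs_snd_lt_aEps hlP hq).le
  calc dist (Hpt q.1 q.2 i) (Hpt q.1 q.2 (i ∘ Fin.natAdd k))
      = |q.2| ^ n * ‖Hpt q.1 q.2 (i ∘ Fin.castAdd n)‖ := dist_Hpt_comp_natAdd q.1 q.2 i
    _ ≤ aEps lP ε ^ n * rEps vP lP ε := by
        gcongr
        · exact pow_nonneg ((abs_nonneg _).trans hlam) n
        · exact norm_Hpt_le_rEps hlP ha hq _
    _ = rEps vP lP ε * aEps lP ε ^ n := mul_comm _ _

/-- For every `(P, λ) ∈ Δ_ε` and every `n ≥ 1`, the set `Λ_ε(P,λ)` is covered by the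
closed discs of radius `2 r_ε a_ε^n` centred at the points `H(P,λ,i)`, `i ∈ I_n^ε`. -/
theorem LamSet_subset_union_closedBall (d : ℕ) [NeZero d] (hd : 3 ≤ d) (vP : Fin d → ℂ) (lP ε : ℝ)
    (hconv : IsConvexPolygon vP) (hε : 0 < ε) (hlow : 0 < lP - ε) (hupp : lP + ε < 1)
    (hball : ∀ w : Fin d → ℂ, ‖w - vP‖ < ε → IsConvexPolygon w)
    (q : (Fin d → ℂ) × ℝ) (hq : q ∈ Delta vP lP ε) (n : ℕ) (hn : 1 ≤ n) :
    LamSet vP lP ε q.1 q.2 ⊆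
      ⋃ i ∈ ItinSet vP lP ε n,
        Metric.closedBall (Hpt q.1 q.2 i) (2 * rEps vP lP ε * aEps lP ε ^ n) := by
  refine (LamSet_subset_union_closedBall_general (by linarith) hupp hq n).trans
    (iUnion₂_mono fun i _ => closedBall_subset_closedBall ?_)
  linarith [rEps_mul_aEps_pow_nonneg vP (show 0 ≤ lP + ε by linarith) n]
end
end
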